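/- arXiv:1909.03667 — 2 statements merged into one kernel-verified Lean document; each statement's English description precedes it below -/
import Mathlib

section
/- Let M > 0 and β ≥ 1 + M/(8π). Then the minimizer of the repulsive free energy F⁺_β on the set of admissible functions f on ℝ² with ∫_{ℝ²} f dx = M is unique: if f₁ and f₂ are both minimizers, then f₁ = f₂ almost everywhere. -/
open MeasureTheory Real Filter

noncomputable section

/-- The Euclidean plane ℝ². -/
abbrev E2 := EuclideanSpace ℝ (Fin 2)

/-- The probability density μ(x) = 1/(π (1+|x|²)²) on ℝ². -/
def mu2 (x : E2) : ℝ := 1 / (π * (1 + ‖x‖ ^ 2) ^ 2)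

/-- The external potential V(x) = −log μ(x) = 2 log(1+|x|²) + log π. -/
def Vpot (x : E2) : ℝ := 2 * Real.log (1 + ‖x‖ ^ 2) + Real.log π

/-- A function f on ℝ² is admissible if it is measurable, nonnegative a.e., integrable,
and ∫ f |log f|, ∫ V f and ∬ f(x) f(y) |log|x−y|| are all finite. -/
def Admissible (f : E2 → ℝ) : Prop :=
  Measurable f ∧ (∀ᵐ x : E2, 0 ≤ f x) ∧ Integrable f ∧
  Integrable (fun x => f x * |Real.log (f x)|) ∧
  Integrable (fun x => Vpot x * f x) ∧
  Integrable (fun p : E2 × E2 => f p.1 * f p.2 * |Real.log ‖p.1 - p.2‖|)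

/-- The repulsive free energy F⁺_β. -/
def Fplus (β : ℝ) (f : E2 → ℝ) : ℝ :=
  (∫ x, f x * Real.log (f x)) + β * (∫ x, Vpot x * f x)
    - (1 / (4 * π)) * ∫ p : E2 × E2, f p.1 * f p.2 * Real.log ‖p.1 - p.2‖

/-- The attractive free energy F⁻_β. -/
def Fminus (β : ℝ) (f : E2 → ℝ) : ℝ :=
  (∫ x, f x * Real.log (f x)) + β * (∫ x, Vpot x * f x)
    + (1 / (4 * π)) * ∫ p : E2 × E2, f p.1 * f p.2 * Real.log ‖p.1 - p.2‖

/-!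
The free energy is strictly convex along segments joining two densities of equal mass, so the
midpoint of two distinct minimizers would have smaller energy. The entropy is strictly convex and
the potential term is linear. For the interaction, put `g = f₁ - f₂`, which has zero mean.
Frullani's integral writes `-log ‖x - y‖²` as `∫₀^∞ (exp (-t‖x - y‖²) - exp (-t)) dt / t`, and each
Gaussian kernel is positive semidefinite because it is a constant multiple of
`∫ exp (-2t‖x - z‖²) exp (-2t‖y - z‖²) dz`; hence `-∬ g(x) g(y) log ‖x - y‖ ≥ 0`.
-/

section Frullani

lemma abs_exp_neg_sub_exp_neg_le (u v : ℝ) :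
    |exp (-u) - exp (-v)| ≤ |u - v| * exp (-min u v) := by
  wlog h : u ≤ v generalizing u v
  · rw [abs_sub_comm, abs_sub_comm u, min_comm]
    exact this v u (le_of_not_ge h)
  have hsplit : exp (-v) = exp (-u) * exp (-(v - u)) := by rw [← exp_add]; ring_nf
  rw [min_eq_left h, abs_of_nonneg (sub_nonneg.2 (exp_le_exp.2 (neg_le_neg h))),
    abs_of_nonpos (sub_nonpos.2 h), hsplit]
  nlinarith [one_sub_le_exp_neg (v - u), exp_pos (-u)]

variable {a b : ℝ}

lemma integrableOn_inv_mul_exp_sub_exp (ha : 0 < a) (hb : 0 < b) :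
    IntegrableOn (fun t : ℝ => t⁻¹ * (exp (-(a * t)) - exp (-(b * t)))) (Set.Ioi 0) := by
  have hdom : IntegrableOn (fun t : ℝ => |a - b| * exp (-min a b * t)) (Set.Ioi 0) :=
    (exp_neg_integrableOn_Ioi 0 (lt_min ha hb)).const_mul _
  refine hdom.mono' (by fun_prop)
    ((ae_restrict_iff' measurableSet_Ioi).2 (Eventually.of_forall fun t (ht : 0 < t) => ?_))
  rw [norm_eq_abs, abs_mul, abs_of_pos (inv_pos.2 ht), inv_mul_le_iff₀ ht]
  calc |exp (-(a * t)) - exp (-(b * t))|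
      ≤ |a * t - b * t| * exp (-min (a * t) (b * t)) := abs_exp_neg_sub_exp_neg_le _ _
    _ = t * (|a - b| * exp (-min a b * t)) := by
      rw [← sub_mul, abs_mul, abs_of_pos ht, ← min_mul_of_nonneg a b ht.le, neg_mul]
      ring

lemma integral_inv_mul_exp_sub_exp (ha : 0 < a) (hb : 0 < b) :
    ∫ t in Set.Ioi (0 : ℝ), t⁻¹ * (exp (-(a * t)) - exp (-(b * t))) = log (b / a) := by
  have hcont : Continuous fun t : ℝ => exp (-t) := by fun_prop
  have hzero : Tendsto (fun t : ℝ => exp (-t)) (nhdsWithin 0 (Set.Ioi 0)) (nhds 1) := by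
    simpa using (hcont.tendsto 0).mono_left nhdsWithin_le_nhds
  simpa using Frullani.integral_Ioi_eq (hcont.locallyIntegrable.locallyIntegrableOn _) ha hb
    hzero tendsto_exp_neg_atTop_nhds_zero (integrableOn_inv_mul_exp_sub_exp ha hb)

lemma integral_norm_inv_mul_exp_sub_exp (ha : 0 < a) (hb : 0 < b) :
    ∫ t in Set.Ioi (0 : ℝ), ‖t⁻¹ * (exp (-(a * t)) - exp (-(b * t)))‖ = |log (b / a)| := by
  wlog h : a ≤ b generalizing a b
  · simpa only [norm_mul, norm_sub_rev (exp (-(b * _))), ← inv_div b a, log_inv, abs_neg]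
      using this hb ha (le_of_not_ge h)
  rw [abs_of_nonneg (log_nonneg ((one_le_div ha).2 h)), ← integral_inv_mul_exp_sub_exp ha hb]
  refine setIntegral_congr_fun measurableSet_Ioi fun t (ht : 0 < t) => norm_of_nonneg ?_
  have hexp : exp (-(b * t)) ≤ exp (-(a * t)) := by gcongr
  exact mul_nonneg (inv_pos.2 ht).le (sub_nonneg.2 hexp)

end Frullani

section GaussianKernel

lemma integral_integral_mul_self_nonneg {α β : Type*} [MeasurableSpace α] [MeasurableSpace β]
    {μ : Measure α} {ν : Measure β} [SFinite μ] [SFinite ν] {h : α → β → ℝ}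
    (hint : Integrable (fun q : (α × α) × β => h q.1.1 q.2 * h q.1.2 q.2)
      ((μ.prod μ).prod ν)) :
    0 ≤ ∫ p, ∫ z, h p.1 z * h p.2 z ∂ν ∂(μ.prod μ) := by
  rw [integral_integral_swap (f := fun (p : α × α) z => h p.1 z * h p.2 z) hint]
  refine integral_nonneg fun z => ?_
  rw [integral_prod_mul (fun x => h x z) fun y => h y z]
  exact mul_self_nonneg _

lemma exp_mul_exp_eq_exp_mul_exp_midpoint {E : Type*}
    [NormedAddCommGroup E] [InnerProductSpace ℝ E] (t : ℝ) (x y z : E) :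
    exp (-(2 * t) * ‖x - z‖ ^ 2) * exp (-(2 * t) * ‖y - z‖ ^ 2) =
      exp (-t * ‖x - y‖ ^ 2) * exp (-(4 * t) * ‖z - midpoint ℝ x y‖ ^ 2) := by
  have h := EuclideanGeometry.dist_sq_add_dist_sq_eq_two_mul_dist_midpoint_sq_add_half_dist_sq z x y
  simp only [dist_eq_norm, norm_sub_rev z x, norm_sub_rev z y] at h
  rw [← exp_add, ← exp_add]
  congr 1
  linear_combination (-(2 * t)) * h

variable {E : Type*} [NormedAddCommGroup E] [MeasurableSpace E] [BorelSpace E] {μ : Measure E}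
  {g : E → ℝ} {t : ℝ}

lemma integrable_mul_mul_gaussian [SecondCountableTopology E] (hg : Integrable g μ) (ht : 0 ≤ t) :
    Integrable (fun p : E × E => g p.1 * g p.2 * exp (-t * ‖p.1 - p.2‖ ^ 2)) (μ.prod μ) := by
  refine (hg.mul_prod hg).mul_bdd (c := 1) (by fun_prop) (Eventually.of_forall fun p => ?_)
  rw [norm_of_nonneg (exp_pos _).le, exp_le_one_iff]
  nlinarith [sq_nonneg ‖p.1 - p.2‖]

variable [InnerProductSpace ℝ E] [FiniteDimensional ℝ E]

lemma integrable_exp_neg_mul_norm_sub_sq (ht : 0 < t) (m : E) :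
    Integrable fun z : E => exp (-t * ‖z - m‖ ^ 2) := by
  have hcentred : Integrable fun z : E => exp (-t * ‖z‖ ^ 2) := by
    refine Integrable.of_integral_ne_zero ?_
    rw [GaussianFourier.integral_rexp_neg_mul_sq_norm ht]
    positivity
  exact hcentred.comp_sub_right m

lemma integral_exp_neg_mul_norm_sub_sq (ht : 0 < t) (m : E) :
    ∫ z : E, exp (-t * ‖z - m‖ ^ 2) = (π / t) ^ (Module.finrank ℝ E / 2 : ℝ) := by
  rw [integral_sub_right_eq_self (fun z : E => exp (-t * ‖z‖ ^ 2)) m,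
    GaussianFourier.integral_rexp_neg_mul_sq_norm ht]

lemma integrable_mul_exp_mul_mul_exp (hg : Integrable g μ) (ht : 0 < t) :
    Integrable (fun q : (E × E) × E => (g q.1.1 * exp (-(2 * t) * ‖q.1.1 - q.2‖ ^ 2)) *
      (g q.1.2 * exp (-(2 * t) * ‖q.1.2 - q.2‖ ^ 2))) ((μ.prod μ).prod volume) := by
  have hgg := integrable_mul_mul_gaussian hg ht.le
  have h4t : 0 < 4 * t := by positivity
  simp only [mul_mul_mul_comm (g _), exp_mul_exp_eq_exp_mul_exp_midpoint, ← mul_assoc (_ * g _)]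
  refine (integrable_prod_iff ?_).2 ⟨Eventually.of_forall fun p => ?_, ?_⟩
  · refine hgg.aestronglyMeasurable.comp_fst.mul (Measurable.aestronglyMeasurable ?_)
    simp only [midpoint_eq_smul_add]
    fun_prop
  · dsimp only
    exact (integrable_exp_neg_mul_norm_sub_sq h4t (midpoint ℝ p.1 p.2)).const_mul _
  · simp only [norm_mul _ (exp (-(4 * t) * _)), norm_of_nonneg (exp_pos (-(4 * t) * _)).le,
      integral_const_mul, integral_exp_neg_mul_norm_sub_sq h4t]
    exact hgg.norm.mul_const _

lemma integral_mul_mul_gaussian_nonneg [SFinite μ] (hg : Integrable g μ) (ht : 0 < t) :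
    0 ≤ ∫ p, g p.1 * g p.2 * exp (-t * ‖p.1 - p.2‖ ^ 2) ∂(μ.prod μ) := by
  have h4t : 0 < 4 * t := by positivity
  have hsq := integral_integral_mul_self_nonneg
    (h := fun x z => g x * exp (-(2 * t) * ‖x - z‖ ^ 2)) (integrable_mul_exp_mul_mul_exp hg ht)
  simp only [mul_mul_mul_comm (g _), exp_mul_exp_eq_exp_mul_exp_midpoint, ← mul_assoc (_ * g _),
    integral_const_mul, integral_exp_neg_mul_norm_sub_sq h4t, integral_mul_const] at hsq
  exact nonneg_of_mul_nonneg_left hsq (by positivity)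

end GaussianKernel

section LogEnergy

lemma log_one_div_sq (r : ℝ) : log (1 / r ^ 2) = -2 * log r := by
  rw [one_div, log_inv, log_pow]
  push_cast
  ring

variable {E : Type*} [NormedAddCommGroup E] [MeasurableSpace E]

/-- The logarithmic energy `∬ f(x) f(y) log ‖x - y‖ dμ(x) dμ(y)` of a density `f` with respect
to `μ`. It carries the sign of the logarithm, so that a repulsive interaction is a negative
multiple of it. -/
def logEnergy (μ : Measure E) (f : E → ℝ) : ℝ :=
  ∫ p, f p.1 * f p.2 * log ‖p.1 - p.2‖ ∂(μ.prod μ)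

lemma ae_prod_fst_ne_snd {α : Type*} [MeasurableSpace α] [MeasurableEq α] (μ ν : Measure α)
    [SFinite ν] [NullSingletonClass ν] : ∀ᵐ p ∂μ.prod ν, p.1 ≠ p.2 := by
  have hdiag : MeasurableSet {p : α × α | p.1 ≠ p.2} := measurableSet_diagonal.compl
  rw [Measure.ae_prod_iff_ae_ae hdiag]
  refine Eventually.of_forall fun x => ?_
  filter_upwards [Measure.ae_ne ν x] with y hy using hy.symm

variable {μ : Measure E} [SFinite μ] {f g : E → ℝ}

lemma integrable_sub_mul_sub_mul_log
    (hff : Integrable (fun p : E × E => f p.1 * f p.2 * log ‖p.1 - p.2‖) (μ.prod μ))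
    (hfg : Integrable (fun p : E × E => f p.1 * g p.2 * log ‖p.1 - p.2‖) (μ.prod μ))
    (hgg : Integrable (fun p : E × E => g p.1 * g p.2 * log ‖p.1 - p.2‖) (μ.prod μ)) :
    Integrable (fun p : E × E => (f p.1 - g p.1) * (f p.2 - g p.2) * log ‖p.1 - p.2‖)
      (μ.prod μ) := by
  have hgf : Integrable (fun p : E × E => g p.1 * f p.2 * log ‖p.1 - p.2‖) (μ.prod μ) := by
    simpa [Function.comp_def, norm_sub_rev, mul_comm (f _)] using hfg.swap
  refine (((hff.sub hfg).sub hgf).add hgg).congr (Eventually.of_forall fun p => ?_)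
  simp only [Pi.add_apply, Pi.sub_apply]
  ring

lemma logEnergy_convexCombination
    (hff : Integrable (fun p : E × E => f p.1 * f p.2 * log ‖p.1 - p.2‖) (μ.prod μ))
    (hfg : Integrable (fun p : E × E => f p.1 * g p.2 * log ‖p.1 - p.2‖) (μ.prod μ))
    (hgg : Integrable (fun p : E × E => g p.1 * g p.2 * log ‖p.1 - p.2‖) (μ.prod μ))
    {a b : ℝ} (hab : a + b = 1) :
    logEnergy μ (fun x => a * f x + b * g x) =
      a * logEnergy μ f + b * logEnergy μ g - a * b * logEnergy μ (fun x => f x - g x) := by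
  have hdiff := integrable_sub_mul_sub_mul_log hff hfg hgg
  simp only [logEnergy]
  rw [← integral_const_mul, ← integral_const_mul, ← integral_const_mul,
    ← integral_add (hff.const_mul a) (hgg.const_mul b),
    ← integral_sub ((hff.const_mul a).fun_add (hgg.const_mul b)) (hdiff.const_mul (a * b))]
  congr 1 with p
  rw [eq_sub_of_add_eq' hab]
  ring

variable [BorelSpace E]

lemma integrable_mul_frullani [SecondCountableTopology E] [NullSingletonClass μ]
    (hg : Integrable g μ)
    (hlog : Integrable (fun p : E × E => g p.1 * g p.2 * log ‖p.1 - p.2‖) (μ.prod μ)) :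
    Integrable (fun q : (E × E) × ℝ => g q.1.1 * g q.1.2 *
        (q.2⁻¹ * (exp (-(‖q.1.1 - q.1.2‖ ^ 2 * q.2)) - exp (-(1 * q.2)))))
      ((μ.prod μ).prod (volume.restrict (Set.Ioi 0))) := by
  have hpos : ∀ᵐ p : E × E ∂μ.prod μ, 0 < ‖p.1 - p.2‖ ^ 2 := by
    filter_upwards [ae_prod_fst_ne_snd μ μ] with p hp
    exact pow_pos (norm_sub_pos_iff.2 hp) 2
  refine (integrable_prod_iff ?_).2 ⟨?_, ?_⟩
  · exact (hg.mul_prod hg).aestronglyMeasurable.comp_fst.mul (by fun_prop)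
  · filter_upwards [hpos] with p hp
    exact (integrableOn_inv_mul_exp_sub_exp hp one_pos).const_mul _
  · refine (hlog.norm.const_mul 2).congr ?_
    filter_upwards [hpos] with p hp
    simp only [norm_mul (g p.1 * g p.2), integral_const_mul,
      integral_norm_inv_mul_exp_sub_exp hp one_pos, log_one_div_sq, abs_mul, abs_neg,
      abs_two, norm_eq_abs (log _)]
    ring

lemma integral_frullani_eq_gaussian [SecondCountableTopology E] (hg : Integrable g μ)
    (hzero : ∫ x, g x ∂μ = 0) {t : ℝ} (ht : 0 ≤ t) :
    ∫ p, g p.1 * g p.2 * (t⁻¹ * (exp (-(‖p.1 - p.2‖ ^ 2 * t)) - exp (-(1 * t)))) ∂(μ.prod μ) =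
      t⁻¹ * ∫ p, g p.1 * g p.2 * exp (-t * ‖p.1 - p.2‖ ^ 2) ∂(μ.prod μ) := by
  have hmass : ∫ p, g p.1 * g p.2 * exp (-(1 * t)) ∂(μ.prod μ) = 0 := by
    rw [integral_mul_const, integral_prod_mul g g, hzero, zero_mul, zero_mul]
  calc ∫ p, g p.1 * g p.2 * (t⁻¹ * (exp (-(‖p.1 - p.2‖ ^ 2 * t)) - exp (-(1 * t)))) ∂(μ.prod μ)
      = ∫ p, t⁻¹ * (g p.1 * g p.2 * exp (-t * ‖p.1 - p.2‖ ^ 2) -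
          g p.1 * g p.2 * exp (-(1 * t))) ∂(μ.prod μ) := by
        congr 1 with p
        ring_nf
    _ = t⁻¹ * ∫ p, g p.1 * g p.2 * exp (-t * ‖p.1 - p.2‖ ^ 2) ∂(μ.prod μ) := by
        rw [integral_const_mul, integral_sub (integrable_mul_mul_gaussian hg ht)
          ((hg.mul_prod hg).mul_const _), hmass, sub_zero]

variable [InnerProductSpace ℝ E] [FiniteDimensional ℝ E]

/-- On functions of zero mean, `-log ‖x - y‖²` is a superposition of the positive semidefinite
Gaussian kernels, because the term `exp (-t)` of Frullani's integral does not contribute. -/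
lemma logEnergy_nonpos [NullSingletonClass μ] (hg : Integrable g μ) (hzero : ∫ x, g x ∂μ = 0)
    (hlog : Integrable (fun p : E × E => g p.1 * g p.2 * log ‖p.1 - p.2‖) (μ.prod μ)) :
    logEnergy μ g ≤ 0 := by
  have hfrullani : -2 * logEnergy μ g = ∫ p, (∫ t in Set.Ioi 0, g p.1 * g p.2 *
      (t⁻¹ * (exp (-(‖p.1 - p.2‖ ^ 2 * t)) - exp (-(1 * t))))) ∂(μ.prod μ) := by
    rw [logEnergy, ← integral_const_mul]
    refine integral_congr_ae ?_
    filter_upwards [ae_prod_fst_ne_snd μ μ] with p hp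
    have hpos : 0 < ‖p.1 - p.2‖ ^ 2 := pow_pos (norm_sub_pos_iff.2 hp) 2
    rw [integral_const_mul, integral_inv_mul_exp_sub_exp hpos one_pos, log_one_div_sq]
    ring
  have hnonneg : 0 ≤ ∫ t in Set.Ioi (0 : ℝ), ∫ p : E × E, g p.1 * g p.2 *
      (t⁻¹ * (exp (-(‖p.1 - p.2‖ ^ 2 * t)) - exp (-(1 * t)))) ∂(μ.prod μ) := by
    refine setIntegral_nonneg measurableSet_Ioi fun t (ht : 0 < t) => ?_
    rw [integral_frullani_eq_gaussian hg hzero ht.le]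
    exact mul_nonneg (inv_pos.2 ht).le (integral_mul_mul_gaussian_nonneg hg ht)
  rw [← integral_integral_swap (integrable_mul_frullani hg hlog), ← hfrullani] at hnonneg
  linarith

lemma le_logEnergy_convexCombination [NullSingletonClass μ] (hf : Integrable f μ)
    (hg : Integrable g μ) (hmass : ∫ x, f x ∂μ = ∫ x, g x ∂μ)
    (hff : Integrable (fun p : E × E => f p.1 * f p.2 * log ‖p.1 - p.2‖) (μ.prod μ))
    (hfg : Integrable (fun p : E × E => f p.1 * g p.2 * log ‖p.1 - p.2‖) (μ.prod μ))
    (hgg : Integrable (fun p : E × E => g p.1 * g p.2 * log ‖p.1 - p.2‖) (μ.prod μ))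
    {a b : ℝ} (ha : 0 ≤ a) (hb : 0 ≤ b) (hab : a + b = 1) :
    a * logEnergy μ f + b * logEnergy μ g ≤ logEnergy μ (fun x => a * f x + b * g x) := by
  have hdiff : logEnergy μ (fun x => f x - g x) ≤ 0 :=
    logEnergy_nonpos (hf.sub hg) (by rw [integral_sub hf hg, hmass, sub_self])
      (integrable_sub_mul_sub_mul_log hff hfg hgg)
  rw [logEnergy_convexCombination hff hfg hgg hab]
  linarith [mul_nonpos_of_nonneg_of_nonpos (mul_nonneg ha hb) hdiff]

end LogEnergy

section Entropy

lemma mul_log_add_mul_log_le {a b : ℝ} (ha : 0 ≤ a) (hb : 0 ≤ b) :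
    a * log a + b * log b ≤ (a + b) * log (a + b) := by
  have hmono : ∀ {u v : ℝ}, 0 ≤ u → 0 ≤ v → u * log u ≤ u * log (u + v) := by
    intro u v hu hv
    rcases hu.eq_or_lt with rfl | hu
    · simp
    · exact mul_le_mul_of_nonneg_left (log_le_log hu (by linarith)) hu.le
  rw [add_mul]
  exact add_le_add (hmono ha hb) (add_comm b a ▸ hmono hb ha)

lemma add_mul_log_add_le {a b : ℝ} (ha : 0 ≤ a) (hb : 0 ≤ b) :
    (a + b) * log (a + b) ≤ a * log a + b * log b + (a + b) * log 2 := by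
  rcases (add_nonneg ha hb).eq_or_lt with hzero | hpos
  · obtain ⟨rfl, rfl⟩ := (add_eq_zero_iff_of_nonneg ha hb).1 hzero.symm
    simp
  · have hconv := convexOn_mul_log.2 ha hb one_half_pos.le one_half_pos.le (add_halves 1)
    have hlog : log (1 / 2 * a + 1 / 2 * b) = log (a + b) - log 2 := by
      rw [← mul_add, log_mul one_half_pos.ne' hpos.ne', one_div, log_inv]
      ring
    simp only [smul_eq_mul, hlog] at hconv
    linarith

variable {α : Type*} [MeasurableSpace α] {μ : Measure α}

lemma integrable_mul_abs_iff {f g : α → ℝ} (hf : AEStronglyMeasurable f μ)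
    (hg : AEStronglyMeasurable g μ) :
    Integrable (fun x => f x * |g x|) μ ↔ Integrable (fun x => f x * g x) μ :=
  integrable_congr' (hf.mul hg.norm) (hf.mul hg) (Eventually.of_forall fun x => by simp)

lemma integrable_add_mul_log_add {f g : α → ℝ} (hf : Integrable f μ) (hg : Integrable g μ)
    (hf₀ : 0 ≤ᵐ[μ] f) (hg₀ : 0 ≤ᵐ[μ] g) (hflog : Integrable (fun x => f x * log (f x)) μ)
    (hglog : Integrable (fun x => g x * log (g x)) μ) :
    Integrable (fun x => (f x + g x) * log (f x + g x)) μ := by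
  refine integrable_of_le_of_le
    (continuous_mul_log.comp_aestronglyMeasurable (hf.add hg).aestronglyMeasurable) ?_ ?_
    (hflog.add hglog) ((hflog.add hglog).add ((hf.add hg).mul_const (log 2)))
  · filter_upwards [hf₀, hg₀] with x hfx hgx using mul_log_add_mul_log_le hfx hgx
  · filter_upwards [hf₀, hg₀] with x hfx hgx using add_mul_log_add_le hfx hgx

lemma integrable_const_mul_mul_log {f : α → ℝ} (hf : Integrable f μ)
    (hflog : Integrable (fun x => f x * log (f x)) μ) (c : ℝ) :
    Integrable (fun x => c * f x * log (c * f x)) μ := by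
  refine ((hf.const_mul (c * log c)).add (hflog.const_mul c)).congr
    (Eventually.of_forall fun x => ?_)
  simp only [Pi.add_apply]
  rcases eq_or_ne c 0 with rfl | hc
  · simp
  rcases eq_or_ne (f x) 0 with hx | hx
  · simp [hx]
  rw [log_mul hc hx]
  ring

lemma integral_comp_convexCombination_lt {F : Type*} [AddCommMonoid F] [Module ℝ F] {s : Set F}
    {φ : F → ℝ} (hφ : StrictConvexOn ℝ s φ) {f g : α → F} (hf : ∀ᵐ x ∂μ, f x ∈ s)
    (hg : ∀ᵐ x ∂μ, g x ∈ s) {a b : ℝ} (ha : 0 < a) (hb : 0 < b) (hab : a + b = 1)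
    (hφf : Integrable (fun x => φ (f x)) μ) (hφg : Integrable (fun x => φ (g x)) μ)
    (hφfg : Integrable (fun x => φ (a • f x + b • g x)) μ) (hne : ¬ f =ᵐ[μ] g) :
    ∫ x, φ (a • f x + b • g x) ∂μ < a * ∫ x, φ (f x) ∂μ + b * ∫ x, φ (g x) ∂μ := by
  have hint : Integrable (fun x => a * φ (f x) + b * φ (g x)) μ :=
    (hφf.const_mul a).add (hφg.const_mul b)
  have hle : (fun x => φ (a • f x + b • g x)) ≤ᵐ[μ] fun x => a * φ (f x) + b * φ (g x) := by
    filter_upwards [hf, hg] with x hfx hgx using hφ.convexOn.2 hfx hgx ha.le hb.le hab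
  rw [← integral_const_mul, ← integral_const_mul,
    ← integral_add (hφf.const_mul a) (hφg.const_mul b)]
  refine (integral_mono_ae hφfg hint hle).lt_of_ne fun heq => hne ?_
  filter_upwards [hf, hg, (integral_eq_iff_of_ae_le hφfg hint hle).1 heq] with x hfx hgx hx
  by_contra hxne
  exact (hφ.2 hfx hgx hxne ha hb hab).ne hx

end Entropy

section MutualInteraction

lemma mul_le_mul_log_add_exp {a : ℝ} (ha : 0 ≤ a) (b : ℝ) : a * b ≤ a * log a + exp b := by
  rcases ha.eq_or_lt with rfl | ha
  · simpa using (exp_pos b).le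
  · have h := add_one_le_exp (b - log a)
    rw [exp_sub, exp_log ha, le_div_iff₀ ha] at h
    linarith

lemma log_norm_sub_le {E : Type*} [SeminormedAddCommGroup E] (x y : E) :
    log ‖x - y‖ ≤ log (1 + ‖x‖ ^ 2) + log (1 + ‖y‖ ^ 2) := by
  have hx : 1 ≤ 1 + ‖x‖ ^ 2 := le_add_of_nonneg_right (sq_nonneg _)
  have hy : 1 ≤ 1 + ‖y‖ ^ 2 := le_add_of_nonneg_right (sq_nonneg _)
  rcases (norm_nonneg (x - y)).eq_or_lt with hzero | hpos
  · rw [← hzero, log_zero]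
    exact add_nonneg (log_nonneg hx) (log_nonneg hy)
  rw [← log_mul (by positivity) (by positivity)]
  refine log_le_log hpos ((norm_sub_le x y).trans ?_)
  nlinarith [sq_nonneg (‖x‖ - 1), sq_nonneg (‖y‖ - 1), sq_nonneg (‖x‖ * ‖y‖)]

lemma abs_mul_neg_log_le (a : ℝ) {r : ℝ} (hr : 0 < r) : |a| * -log r ≤ |a * log a| + r⁻¹ := by
  have h := mul_le_mul_log_add_exp (abs_nonneg a) (-log r)
  rw [exp_neg, exp_log hr, log_abs] at h
  refine h.trans (add_le_add_left ?_ _)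
  rw [abs_mul]
  exact mul_le_mul_of_nonneg_left (le_abs_self _) (abs_nonneg a)

/-- Near the diagonal the logarithm is absorbed by the entropy of `a`, away from it by the
logarithmic moments. -/
lemma abs_mul_abs_log_norm_sub_le {E : Type*} [NormedAddCommGroup E] (a : ℝ) (x y : E) :
    |a| * |log ‖x - y‖| ≤ |log (1 + ‖x‖ ^ 2) * a| + |a| * log (1 + ‖y‖ ^ 2) + |a * log a| +
      (Metric.ball (0 : E) 1).indicator (fun z => ‖z‖⁻¹) (x - y) := by
  have hx : 0 ≤ log (1 + ‖x‖ ^ 2) := log_nonneg (le_add_of_nonneg_right (sq_nonneg _))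
  have hy : 0 ≤ log (1 + ‖y‖ ^ 2) := log_nonneg (le_add_of_nonneg_right (sq_nonneg _))
  have hxa : |log (1 + ‖x‖ ^ 2) * a| = |a| * log (1 + ‖x‖ ^ 2) := by
    rw [abs_mul, abs_of_nonneg hx, mul_comm]
  have hax := mul_nonneg (abs_nonneg a) hx
  have hay := mul_nonneg (abs_nonneg a) hy
  rcases lt_or_ge ‖x - y‖ 1 with hnear | hfar
  · rw [Set.indicator_of_mem (mem_ball_zero_iff.2 hnear),
      abs_of_nonpos (log_nonpos (norm_nonneg _) hnear.le)]
    rcases (norm_nonneg (x - y)).eq_or_lt with hzero | hpos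
    · simp only [← hzero, log_zero, neg_zero, mul_zero, inv_zero]
      positivity
    · linarith [abs_mul_neg_log_le a hpos]
  · rw [Set.indicator_of_notMem (fun h => hfar.not_gt (mem_ball_zero_iff.1 h)),
      abs_of_nonneg (log_nonneg hfar)]
    have hlog := mul_le_mul_of_nonneg_left (log_norm_sub_le x y) (abs_nonneg a)
    linarith [abs_nonneg (a * log a)]

variable {E : Type*} [NormedAddCommGroup E] [NormedSpace ℝ E] [FiniteDimensional ℝ E]
  [MeasurableSpace E] [BorelSpace E]

lemma integrable_indicator_ball_inv_norm (μ : Measure E) [μ.IsAddHaarMeasure]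
    (hE : 1 < Module.finrank ℝ E) (r : ℝ) :
    Integrable ((Metric.ball (0 : E) r).indicator fun z => ‖z‖⁻¹) μ := by
  rw [integrable_indicator_iff measurableSet_ball]
  refine integrableOn_ball_of_norm_le_rpow (C := 1) (α := 1) hE.le (by exact_mod_cast hE)
    (Eventually.of_forall fun z => ?_) (by fun_prop)
  rw [rpow_neg_one, one_mul, norm_inv, norm_norm]

lemma integrable_mul_mul_log_norm_sub {μ : Measure E} [μ.IsAddHaarMeasure]
    (hE : 1 < Module.finrank ℝ E) {f g : E → ℝ} (hf : Integrable f μ) (hg : Integrable g μ)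
    (hflog : Integrable (fun x => f x * log (f x)) μ)
    (hfmoment : Integrable (fun x => log (1 + ‖x‖ ^ 2) * f x) μ)
    (hgmoment : Integrable (fun x => log (1 + ‖x‖ ^ 2) * g x) μ) :
    Integrable (fun p : E × E => f p.1 * g p.2 * log ‖p.1 - p.2‖) (μ.prod μ) := by
  have hsingular : Integrable (fun p : E × E =>
      g p.2 * (Metric.ball (0 : E) 1).indicator (fun z => ‖z‖⁻¹) (p.1 - p.2)) (μ.prod μ) :=
    hg.convolution_integrand (ContinuousLinearMap.mul ℝ ℝ)
      (integrable_indicator_ball_inv_norm μ hE 1)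
  refine Integrable.mono' ((((hfmoment.mul_prod hg).norm.add (hf.mul_prod hgmoment).norm).add
      (hflog.mul_prod hg).norm).add hsingular.norm)
    ((hf.mul_prod hg).aestronglyMeasurable.mul
      (Measurable.aestronglyMeasurable (by fun_prop)))
    (Eventually.of_forall fun p => ?_)
  have h := mul_le_mul_of_nonneg_right (abs_mul_abs_log_norm_sub_le (f p.1) p.1 p.2)
    (abs_nonneg (g p.2))
  have hy : 0 ≤ log (1 + ‖p.2‖ ^ 2) := log_nonneg (le_add_of_nonneg_right (sq_nonneg _))
  have hind : 0 ≤ (Metric.ball (0 : E) 1).indicator (fun z => ‖z‖⁻¹) (p.1 - p.2) :=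
    Set.indicator_nonneg (fun z _ => inv_nonneg.2 (norm_nonneg z)) _
  simp only [Pi.add_apply, norm_mul, norm_eq_abs, abs_mul, abs_of_nonneg hy,
    abs_of_nonneg hind] at h ⊢
  linarith

end MutualInteraction

section Admissible

variable {f g : E2 → ℝ}

lemma integrable_log_one_add_norm_sq_mul (hf : Integrable f)
    (hV : Integrable fun x => Vpot x * f x) :
    Integrable fun x => log (1 + ‖x‖ ^ 2) * f x := by
  refine ((hV.sub (hf.const_mul (log π))).div_const 2).congr (Eventually.of_forall fun x => ?_)
  simp only [Pi.sub_apply, Vpot]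
  ring

lemma Admissible.integrable_mul_log (hf : Admissible f) :
    Integrable fun x => f x * log (f x) :=
  (integrable_mul_abs_iff hf.1.aestronglyMeasurable hf.1.log.aestronglyMeasurable).1 hf.2.2.2.1

lemma Admissible.integrable_mul_mul_log (hf : Admissible f) (hg : Admissible g) :
    Integrable fun p : E2 × E2 => f p.1 * g p.2 * log ‖p.1 - p.2‖ := by
  have hflog := hf.integrable_mul_log
  obtain ⟨-, -, hfi, -, hfV, -⟩ := hf
  obtain ⟨-, -, hgi, -, hgV, -⟩ := hg
  exact integrable_mul_mul_log_norm_sub (by simp) hfi hgi hflog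
    (integrable_log_one_add_norm_sq_mul hfi hfV) (integrable_log_one_add_norm_sq_mul hgi hgV)

/-- The entropy and the potential energy control the interaction energy; this is why admissibility
is stable under sums. -/
lemma admissible_iff : Admissible f ↔ Measurable f ∧ 0 ≤ᵐ[volume] f ∧ Integrable f ∧
    (Integrable fun x => f x * log (f x)) ∧ Integrable fun x => Vpot x * f x := by
  refine ⟨fun hf => ⟨hf.1, hf.2.1, hf.2.2.1, hf.integrable_mul_log, hf.2.2.2.2.1⟩, ?_⟩
  rintro ⟨hm, h₀, hi, hlog, hV⟩
  have hmoment := integrable_log_one_add_norm_sq_mul hi hV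
  exact ⟨hm, h₀, hi, (integrable_mul_abs_iff hi.1 hm.log.aestronglyMeasurable).2 hlog, hV,
    (integrable_mul_abs_iff (hi.mul_prod hi).1 (Measurable.aestronglyMeasurable (by fun_prop))).2
      (integrable_mul_mul_log_norm_sub (by simp) hi hi hlog hmoment hmoment)⟩

lemma Admissible.const_mul (hf : Admissible f) {c : ℝ} (hc : 0 ≤ c) :
    Admissible fun x => c * f x := by
  obtain ⟨hm, h₀, hi, hlog, hV⟩ := admissible_iff.1 hf
  refine admissible_iff.2 ⟨hm.const_mul c, ?_, hi.const_mul c,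
    integrable_const_mul_mul_log hi hlog c, ?_⟩
  · filter_upwards [h₀] with x hx using mul_nonneg hc hx
  · simpa only [mul_left_comm] using hV.const_mul c

lemma Admissible.add (hf : Admissible f) (hg : Admissible g) :
    Admissible fun x => f x + g x := by
  obtain ⟨hfm, hf₀, hfi, hflog, hfV⟩ := admissible_iff.1 hf
  obtain ⟨hgm, hg₀, hgi, hglog, hgV⟩ := admissible_iff.1 hg
  refine admissible_iff.2 ⟨hfm.add hgm, ?_, hfi.add hgi,
    integrable_add_mul_log_add hfi hgi hf₀ hg₀ hflog hglog, ?_⟩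
  · filter_upwards [hf₀, hg₀] with x hfx hgx using add_nonneg hfx hgx
  · simpa only [mul_add] using hfV.fun_add hgV

lemma Fplus_eq (β : ℝ) (f : E2 → ℝ) : Fplus β f =
    (∫ x, f x * log (f x)) + β * (∫ x, Vpot x * f x) - (1 / (4 * π)) * logEnergy volume f :=
  rfl

theorem Fplus_convexCombination_lt (β : ℝ) (hf : Admissible f) (hg : Admissible g)
    (hmass : ∫ x, f x = ∫ x, g x) (hne : ¬ f =ᵐ[volume] g) {a b : ℝ} (ha : 0 < a) (hb : 0 < b)
    (hab : a + b = 1) :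
    Fplus β (fun x => a * f x + b * g x) < a * Fplus β f + b * Fplus β g := by
  obtain ⟨-, hf₀, hfi, hflog, hfV⟩ := admissible_iff.1 hf
  obtain ⟨-, hg₀, hgi, hglog, hgV⟩ := admissible_iff.1 hg
  have hentropy : ∫ x, (a * f x + b * g x) * log (a * f x + b * g x) <
      a * (∫ x, f x * log (f x)) + b * ∫ x, g x * log (g x) :=
    integral_comp_convexCombination_lt strictConvexOn_mul_log hf₀ hg₀ ha hb hab hflog hglog
      ((hf.const_mul ha.le).add (hg.const_mul hb.le)).integrable_mul_log hne
  have hpotential : ∫ x, Vpot x * (a * f x + b * g x) =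
      a * (∫ x, Vpot x * f x) + b * ∫ x, Vpot x * g x := by
    simp only [mul_add, mul_left_comm (Vpot _)]
    rw [integral_add (hfV.const_mul a) (hgV.const_mul b), integral_const_mul, integral_const_mul]
  have hinteraction := mul_le_mul_of_nonneg_left
    (le_logEnergy_convexCombination hfi hgi hmass (hf.integrable_mul_mul_log hf)
      (hf.integrable_mul_mul_log hg) (hg.integrable_mul_mul_log hg) ha.le hb.le hab)
    (by positivity : 0 ≤ 1 / (4 * π))
  rw [Fplus_eq, Fplus_eq, Fplus_eq, hpotential]
  linarith

end Admissible

theorem Fplus_minimizer_unique_general (M β : ℝ) (f₁ f₂ : E2 → ℝ)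
    (h₁ : Admissible f₁ ∧ (∫ x, f₁ x) = M ∧
      ∀ f : E2 → ℝ, Admissible f → (∫ x, f x) = M → Fplus β f₁ ≤ Fplus β f)
    (h₂ : Admissible f₂ ∧ (∫ x, f₂ x) = M ∧
      ∀ f : E2 → ℝ, Admissible f → (∫ x, f x) = M → Fplus β f₂ ≤ Fplus β f) :
    f₁ =ᵐ[volume] f₂ := by
  obtain ⟨hadm₁, hmass₁, hmin₁⟩ := h₁
  obtain ⟨hadm₂, hmass₂, hmin₂⟩ := h₂
  let m : E2 → ℝ := fun x => 1 / 2 * f₁ x + 1 / 2 * f₂ x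
  have hadm : Admissible m :=
    (hadm₁.const_mul one_half_pos.le).add (hadm₂.const_mul one_half_pos.le)
  have hmass : ∫ x, m x = M := by
    rw [integral_add (hadm₁.2.2.1.const_mul _) (hadm₂.2.2.1.const_mul _), integral_const_mul,
      integral_const_mul, hmass₁, hmass₂]
    ring
  by_contra hne
  have hlt : Fplus β m < 1 / 2 * Fplus β f₁ + 1 / 2 * Fplus β f₂ :=
    Fplus_convexCombination_lt β hadm₁ hadm₂ (hmass₁.trans hmass₂.symm) hne one_half_pos
      one_half_pos (add_halves 1)
  linarith [hmin₁ m hadm hmass, hmin₂ m hadm hmass]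

/-- Uniqueness of the minimizer of the repulsive free energy F⁺_β when β ≥ 1 + M/(8π). -/
theorem Fplus_minimizer_unique (M β : ℝ) (hM : 0 < M) (hβ : β ≥ 1 + M / (8 * π))
    (f₁ f₂ : E2 → ℝ)
    (h₁ : Admissible f₁ ∧ (∫ x, f₁ x) = M ∧
      ∀ f : E2 → ℝ, Admissible f → (∫ x, f x) = M → Fplus β f₁ ≤ Fplus β f)
    (h₂ : Admissible f₂ ∧ (∫ x, f₂ x) = M ∧
      ∀ f : E2 → ℝ, Admissible f → (∫ x, f x) = M → Fplus β f₂ ≤ Fplus β f) :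
    f₁ =ᵐ[volume] f₂ := by
  exact Fplus_minimizer_unique_general M β f₁ f₂ h₁ h₂
end
end

section
/- Let α ∈ [0,1), M > 0 and f_⋆ = M μ. For every admissible function f on ℝ² with ∫_{ℝ²} f dx = M, one has ∫_{ℝ²} f log(f/f_⋆) dx ≥ −(2/M)(1−α) ∬_{ℝ²×ℝ²} (f(x)−f_⋆(x)) (f(y)−f_⋆(y)) log|x−y| dx dy. -/
open MeasureTheory Real Filter

noncomputable section

/-!
The density `mu2` is that of the uniform measure of the sphere seen through stereographic
projection, and `log |x - y|` differs from the logarithm of the chordal distance by a function of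
`x` plus a function of `y`. On the sphere, the claim for `α = 0` says that the free energy
`∫ ρ log ρ + ∬ ρ ρ log (chord ^ 2 / 4)` of a probability density is at least `-1`, its value at
`ρ = 1`; other `α` follow by combining this with the nonnegativity of the entropy.

The free energy is conformally invariant, so `ρ` may be pulled back by the similarity that minimizes
the mean logarithm of the conformal factor, which centers it: `∫ ρ ω = 0` for the position vector
`ω`. A centered density can be multiplied by `1 ± s ω_i` without changing its mass. Summing over the
three coordinates and comparing with the infimum `Λ` of the free energy `Φ` gives
`6 (Λ - Φ(ρ)) ≤ s² (2 + 2 Φ(ρ)) + s⁴`: the kernel `(1 - t) log (1 - t)`, `t = ω(x) · ω(y)`, that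
comes up is `-t` plus a power series in `t` with nonnegative coefficients, so its quadratic form is
nonnegative on `ρ - 1` when `ρ` is centered. Letting `Φ(ρ)` approach `Λ` with `s` small forces
`Λ ≥ -1`.
-/

open scoped InnerProductSpace
open EuclideanGeometry Module

/-! ### Calculus on the unit interval -/

lemma mul_mul_log_mul (x y : ℝ) :
    x * y * log (x * y) = x * log x * y + x * (y * log y) := by
  have h := negMulLog_mul x y
  simp only [negMulLog] at h
  linarith

lemma mul_le_mul_log_sub_add_exp {a : ℝ} (ha : 0 ≤ a) (b : ℝ) :
    a * b ≤ a * log a - a + exp b := by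
  rcases ha.eq_or_lt with rfl | ha
  · simpa using (exp_pos b).le
  · have h := mul_le_mul_of_nonneg_left (add_one_le_exp (b - log a)) ha.le
    rw [exp_sub, exp_log ha, mul_div_cancel₀ _ ha.ne'] at h
    linarith

lemma hasSum_one_sub_mul_log_of_abs_lt_one {t : ℝ} (ht : |t| < 1) :
    HasSum (fun n : ℕ => t ^ (n + 2) * (1 / ((n + 1) * (n + 2))))
      ((1 - t) * log (1 - t) + t) := by
  have hlog := hasSum_pow_div_log_of_abs_lt_one ht
  convert (hlog.mul_left t).sub ((hasSum_nat_add_iff' 1).mpr hlog) using 1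
  · rfl
  · ext n
    push_cast
    field_simp
    ring
  · simp only [Finset.range_one, Finset.sum_singleton, zero_add, pow_one, Nat.cast_zero, div_one]
    ring

lemma summable_one_div_succ_mul_succ_succ :
    Summable fun n : ℕ => 1 / (((n : ℝ) + 1) * (n + 2)) := by
  refine .of_nonneg_of_le (fun n => by positivity) (fun n => ?_)
    ((summable_nat_add_iff 1).mpr (summable_one_div_nat_pow.mpr one_lt_two))
  push_cast
  rw [sq]
  gcongr
  linarith

lemma hasSum_one_sub_mul_log {t : ℝ} (ht : |t| ≤ 1) :
    HasSum (fun n : ℕ => t ^ (n + 2) * (1 / ((n + 1) * (n + 2))))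
      ((1 - t) * log (1 - t) + t) := by
  have hle : ∀ (n : ℕ), ∀ s ∈ Set.Icc (-1 : ℝ) 1,
      ‖s ^ (n + 2) * (1 / (((n : ℝ) + 1) * (n + 2)))‖ ≤ 1 / (((n : ℝ) + 1) * (n + 2)) := by
    intro n s hs
    rw [norm_mul, norm_pow, norm_of_nonneg (by positivity : 0 ≤ 1 / (((n : ℝ) + 1) * (n + 2)))]
    exact mul_le_of_le_one_left (by positivity) (pow_le_one₀ (norm_nonneg _) (abs_le.mpr hs))
  have hcont : ContinuousOn
      (fun s : ℝ => ∑' n : ℕ, s ^ (n + 2) * (1 / (((n : ℝ) + 1) * (n + 2)))) (Set.Icc (-1) 1) :=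
    continuousOn_tsum (fun n => by fun_prop) summable_one_div_succ_mul_succ_succ hle
  have heq := Set.EqOn.of_subset_closure (s := Set.Ioo (-1 : ℝ) 1)
    (fun s hs => (hasSum_one_sub_mul_log_of_abs_lt_one (abs_lt.mpr hs)).tsum_eq) hcont
    (g := fun s => (1 - s) * log (1 - s) + s)
    (continuous_mul_log.comp (by fun_prop : Continuous fun s : ℝ => 1 - s) |>.add
      continuous_id).continuousOn
    Set.Ioo_subset_Icc_self (closure_Ioo (by norm_num)).ge
  have htsum : _ = (1 - t) * log (1 - t) + t := heq (abs_le.mp ht)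
  rw [← htsum]
  exact (Summable.of_norm_bounded summable_one_div_succ_mul_succ_succ
    fun n => hle n t (abs_le.mp ht)).hasSum

lemma one_add_mul_log_add_one_sub_mul_log_le {t : ℝ} (ht : |t| ≤ 1) :
    (1 + t) * log (1 + t) + (1 - t) * log (1 - t) ≤ t ^ 2 + t ^ 4 := by
  have hneg := hasSum_one_sub_mul_log (t := -t) (by rwa [abs_neg])
  have hone := hasSum_one_sub_mul_log (t := 1) (by simp)
  rw [sub_neg_eq_add] at hneg
  have hbound := (hone.mul_left (2 * t ^ 4)).add (hasSum_ite_eq 0 (t ^ 2 - t ^ 4))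
  have hle : ∀ n : ℕ, (-t) ^ (n + 2) * (1 / ((n + 1) * (n + 2)))
      + t ^ (n + 2) * (1 / ((n + 1) * (n + 2)))
      ≤ 2 * t ^ 4 * (1 ^ (n + 2) * (1 / ((n + 1) * (n + 2))))
        + if n = 0 then t ^ 2 - t ^ 4 else 0 := by
    intro n
    rw [← add_mul, one_pow, one_mul]
    rcases n with _ | n
    · norm_num
      linarith
    simp only [Nat.add_eq_zero_iff, one_ne_zero, and_false, if_false, add_zero]
    gcongr
    rcases Nat.even_or_odd n with hn | hn
    · rw [(by grind : Odd (n + 1 + 2)).neg_pow]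
      linarith [(by positivity : 0 ≤ 2 * t ^ 4)]
    · rw [(by grind : Even (n + 1 + 2)).neg_pow, ← two_mul]
      obtain ⟨m, rfl⟩ := hn
      rw [show 2 * m + 1 + 1 + 2 = 4 + 2 * m by ring, pow_add, pow_mul t 2 m]
      have : (t ^ 2) ^ m ≤ 1 := pow_le_one₀ (sq_nonneg t) ((sq_le_one_iff_abs_le_one t).mpr ht)
      exact mul_le_mul_of_nonneg_left (mul_le_of_le_one_right (by positivity) this) zero_le_two
  have := hasSum_le hle (hneg.add (hasSum_one_sub_mul_log ht)) hbound
  simp only [sub_self, log_zero, mul_zero, zero_add, mul_one] at this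
  linarith

lemma setIntegral_Ioo_eq_intervalIntegral (f : ℝ → ℝ) :
    ∫ u in Set.Ioo (0 : ℝ) 1, f u = ∫ u in (0 : ℝ)..1, f u := by
  rw [intervalIntegral.integral_of_le zero_le_one, integral_Ioc_eq_integral_Ioo]

lemma integrableOn_log_Ioo : IntegrableOn log (Set.Ioo 0 1) :=
  (intervalIntegrable_iff_integrableOn_Ioo_of_le zero_le_one).mp
    intervalIntegral.intervalIntegrable_log'

lemma integral_log_Ioo : ∫ u in Set.Ioo (0 : ℝ) 1, log u = -1 := by
  rw [setIntegral_Ioo_eq_intervalIntegral, integral_log]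
  simp

lemma integral_mul_log_Ioo : ∫ u in Set.Ioo (0 : ℝ) 1, u * log u = -1 / 4 := by
  have hcont : Continuous fun u : ℝ => u / 2 * (u * log u) - u ^ 2 / 4 :=
    ((continuous_id.div_const 2).mul continuous_mul_log).sub (by fun_prop)
  have hderiv : ∀ u ∈ Set.Ioo (0 : ℝ) 1,
      HasDerivAt (fun u : ℝ => u / 2 * (u * log u) - u ^ 2 / 4) (u * log u) u := by
    intro u hu
    refine ((((hasDerivAt_id u).div_const 2).fun_mul (hasDerivAt_mul_log hu.1.ne')).fun_sub
      ((hasDerivAt_pow 2 u).div_const 4)).congr_deriv ?_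
    simp only [id_eq, Nat.cast_ofNat, Nat.add_one_sub_one, pow_one]
    ring
  rw [setIntegral_Ioo_eq_intervalIntegral, intervalIntegral.integral_eq_sub_of_hasDerivAt_of_le
    zero_le_one hcont.continuousOn hderiv (continuous_mul_log.intervalIntegrable _ _)]
  norm_num

lemma integrableOn_rpow_neg_half_Ioo :
    IntegrableOn (fun u : ℝ => u ^ (-(1 / 2) : ℝ)) (Set.Ioo 0 1) :=
  (intervalIntegrable_iff_integrableOn_Ioo_of_le zero_le_one).mp
    (intervalIntegral.intervalIntegrable_rpow' (by norm_num))

lemma integral_rpow_neg_half_Ioo : ∫ u in Set.Ioo (0 : ℝ) 1, u ^ (-(1 / 2) : ℝ) = 2 := by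
  rw [setIntegral_Ioo_eq_intervalIntegral, integral_rpow (Or.inl (by norm_num))]
  norm_num

lemma integral_one_sub_two_mul_Ioo : ∫ u in Set.Ioo (0 : ℝ) 1, (1 - 2 * u) = 0 := by
  rw [setIntegral_Ioo_eq_intervalIntegral, intervalIntegral.integral_sub (by simp)
    ((continuous_const_mul 2).intervalIntegrable _ _), intervalIntegral.integral_const_mul,
    integral_id]
  norm_num

/-! ### Positive definite kernels -/

section PositiveKernels

variable {X W : Type*} [NormedAddCommGroup W] [InnerProductSpace ℝ W]

lemma abs_inner_le_one {ω : X → W} (hω : ∀ x, ‖ω x‖ ≤ 1) (x y : X) : |⟪ω x, ω y⟫_ℝ| ≤ 1 :=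
  (abs_real_inner_le_norm _ _).trans (mul_le_one₀ (hω x) (norm_nonneg _) (hω y))

variable [MeasurableSpace X] {m : Measure X}

/-- The quadratic form `∬ h(x) h(y) K(x, y) dm(x) dm(y)` of the kernel `K`. -/
def pairing (m : Measure X) (h : X → ℝ) (K : X → X → ℝ) : ℝ :=
  ∫ p : X × X, h p.1 * h p.2 * K p.1 p.2 ∂(m.prod m)

lemma pairing_add {h : X → ℝ} {K L : X → X → ℝ}
    (hK : Integrable (fun p : X × X => h p.1 * h p.2 * K p.1 p.2) (m.prod m))
    (hL : Integrable (fun p : X × X => h p.1 * h p.2 * L p.1 p.2) (m.prod m)) :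
    pairing m h (fun x y => K x y + L x y) = pairing m h K + pairing m h L := by
  simp only [pairing, mul_add]
  exact integral_add hK hL

lemma pairing_add_add [SFinite m] {h : X → ℝ}
    (hh : Integrable h m) (hh0 : ∫ x, h x ∂m = 0) {a : X → ℝ}
    (ha : Integrable (fun x => h x * a x) m) {K : X → X → ℝ}
    (hK : Integrable (fun p : X × X => h p.1 * h p.2 * K p.1 p.2) (m.prod m)) :
    pairing m h (fun x y => K x y + (a x + a y)) = pairing m h K := by
  have hexpand : ∀ p : X × X, h p.1 * h p.2 * (K p.1 p.2 + (a p.1 + a p.2)) =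
      h p.1 * h p.2 * K p.1 p.2 + (h p.1 * a p.1 * h p.2 + h p.1 * (h p.2 * a p.2)) := by
    intro p
    ring
  simp only [pairing, hexpand]
  rw [integral_add hK (by exact (ha.mul_prod hh).add (hh.mul_prod ha)),
    integral_add (ha.mul_prod hh) (hh.mul_prod ha), integral_prod_mul (fun x => h x * a x),
    integral_prod_mul h fun y => h y * a y, hh0, mul_zero, zero_mul, add_zero, add_zero]

variable [MeasurableSpace W] [BorelSpace W]

lemma integrable_pairing_comp_inner [SecondCountableTopology W] {h : X → ℝ}
    (hh : Integrable h m) {ω : X → W} (hω : Measurable ω) (hω1 : ∀ x, ‖ω x‖ ≤ 1)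
    {φ : ℝ → ℝ} (hφ : Continuous φ) :
    Integrable (fun p : X × X => h p.1 * h p.2 * φ ⟪ω p.1, ω p.2⟫_ℝ) (m.prod m) := by
  obtain ⟨C, hC⟩ := (isCompact_Icc (a := (-1 : ℝ)) (b := 1)).exists_bound_of_continuousOn
    hφ.continuousOn
  exact (hh.mul_prod hh).mul_bdd (by fun_prop)
    (ae_of_all _ fun p => hC _ (abs_le.mp (abs_inner_le_one hω1 p.1 p.2)))

lemma hasSum_pairing_inner_pow [SecondCountableTopology W] {h : X → ℝ}
    (hh : Integrable h m) {ω : X → W} (hω : Measurable ω) (hω1 : ∀ x, ‖ω x‖ ≤ 1) :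
    HasSum (fun n : ℕ => pairing m h (fun x y => ⟪ω x, ω y⟫_ℝ ^ (n + 2)) *
        (1 / (((n : ℝ) + 1) * (n + 2))))
      (pairing m h fun x y =>
        (1 - ⟪ω x, ω y⟫_ℝ) * log (1 - ⟪ω x, ω y⟫_ℝ) + ⟪ω x, ω y⟫_ℝ) := by
  let F : ℕ → X × X → ℝ := fun n p =>
    h p.1 * h p.2 * ⟪ω p.1, ω p.2⟫_ℝ ^ (n + 2) * (1 / (((n : ℝ) + 1) * (n + 2)))
  have hF : ∀ n, Integrable (F n) (m.prod m) := fun n =>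
    (integrable_pairing_comp_inner hh hω hω1 (continuous_pow (n + 2))).mul_const _
  have hF_le : ∀ n p, ‖F n p‖ ≤ ‖h p.1 * h p.2‖ * (1 / (((n : ℝ) + 1) * (n + 2))) := by
    intro n p
    rw [norm_mul, norm_mul (h p.1 * h p.2), norm_pow,
      norm_of_nonneg (by positivity : 0 ≤ 1 / (((n : ℝ) + 1) * (n + 2)))]
    gcongr
    exact mul_le_of_le_one_right (norm_nonneg _)
      (pow_le_one₀ (norm_nonneg _) (abs_inner_le_one hω1 _ _))
  have hsummable : Summable fun n => ∫ p, ‖F n p‖ ∂(m.prod m) := by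
    refine .of_nonneg_of_le (fun n => integral_nonneg fun p => norm_nonneg _) (fun n => ?_)
      (summable_one_div_succ_mul_succ_succ.mul_left (∫ p : X × X, ‖h p.1 * h p.2‖ ∂(m.prod m)))
    rw [← integral_mul_const]
    exact integral_mono (hF n).norm ((hh.mul_prod hh).norm.mul_const _) (hF_le n)
  convert hasSum_integral_of_summable_integral_norm hF hsummable using 1
  · rfl
  · ext n
    exact (integral_mul_const _ _).symm
  · refine integral_congr_ae (ae_of_all _ fun p => ?_)
    have := (hasSum_one_sub_mul_log (abs_inner_le_one hω1 p.1 p.2)).mul_left (h p.1 * h p.2)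
    simp only [F, mul_assoc] at this ⊢
    exact this.tsum_eq.symm

variable [SFinite m]

lemma pairing_inner_pow_nonneg [FiniteDimensional ℝ W] {h : X → ℝ}
    (hh : Integrable h m) {ω : X → W} (hω : Measurable ω) (hω1 : ∀ x, ‖ω x‖ ≤ 1) (n : ℕ) :
    0 ≤ pairing m h fun x y => ⟪ω x, ω y⟫_ℝ ^ n := by
  induction n generalizing h with
  | zero =>
    simp only [pairing, pow_zero, mul_one]
    rw [integral_prod_mul]
    exact mul_self_nonneg _
  | succ n ih =>
    let b := stdOrthonormalBasis ℝ W
    have hcoord : ∀ i, Integrable (fun x => h x * ⟪b i, ω x⟫_ℝ) m := fun i =>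
      hh.mul_bdd (c := 1) (by fun_prop) (ae_of_all _ fun x =>
        (norm_inner_le_norm _ _).trans (by simpa using hω1 x))
    have hexpand : ∀ p : X × X, h p.1 * h p.2 * ⟪ω p.1, ω p.2⟫_ℝ ^ (n + 1) =
        ∑ i, h p.1 * ⟪b i, ω p.1⟫_ℝ * (h p.2 * ⟪b i, ω p.2⟫_ℝ) * ⟪ω p.1, ω p.2⟫_ℝ ^ n := by
      intro p
      rw [pow_succ, ← b.sum_inner_mul_inner (ω p.1) (ω p.2), Finset.mul_sum, Finset.mul_sum]
      refine Finset.sum_congr rfl fun i _ => ?_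
      rw [real_inner_comm (b i) (ω p.1), b.sum_inner_mul_inner]
      ring
    rw [pairing, integral_congr_ae (ae_of_all _ hexpand),
      integral_finsetSum _ fun i _ =>
        integrable_pairing_comp_inner (hcoord i) hω hω1 (continuous_pow n)]
    exact Finset.sum_nonneg fun i _ => ih (hcoord i)

lemma pairing_inner_eq_norm_sq [CompleteSpace W] [SecondCountableTopology W]
    {h : X → ℝ} (hh : Integrable h m) {ω : X → W} (hω : Measurable ω) (hω1 : ∀ x, ‖ω x‖ ≤ 1) :
    pairing m h (fun x y => ⟪ω x, ω y⟫_ℝ) = ‖∫ x, h x • ω x ∂m‖ ^ 2 := by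
  have hvec : Integrable (fun x => h x • ω x) m :=
    hh.smul_bdd 1 hω.aestronglyMeasurable (ae_of_all _ hω1)
  have hint := integrable_pairing_comp_inner hh hω hω1 (continuous_pow 1)
  simp only [pow_one] at hint
  have hinner : ∀ x y, h x * h y * ⟪ω x, ω y⟫_ℝ = ⟪h x • ω x, h y • ω y⟫_ℝ := by
    intro x y
    rw [real_inner_smul_left, real_inner_smul_right, mul_assoc]
  rw [pairing, integral_prod _ hint, ← real_inner_self_eq_norm_sq, ← integral_inner hvec]
  refine integral_congr_ae (ae_of_all _ fun x => ?_)
  simp only [hinner]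
  rw [integral_inner hvec, real_inner_comm]

lemma pairing_one_sub_inner_mul_log_nonneg [FiniteDimensional ℝ W] {h : X → ℝ}
    (hh : Integrable h m) {ω : X → W} (hω : Measurable ω) (hω1 : ∀ x, ‖ω x‖ ≤ 1)
    (hcentered : ∫ x, h x • ω x ∂m = 0) :
    0 ≤ pairing m h fun x y => (1 - ⟪ω x, ω y⟫_ℝ) * log (1 - ⟪ω x, ω y⟫_ℝ) := by
  have hlog := hasSum_pairing_inner_pow hh hω hω1
  have hnonneg := hlog.nonneg fun n =>
    mul_nonneg (pairing_inner_pow_nonneg hh hω hω1 (n + 2)) (by positivity)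
  rw [pairing_add (K := fun x y => (1 - ⟪ω x, ω y⟫_ℝ) * log (1 - ⟪ω x, ω y⟫_ℝ))
      (L := fun x y => ⟪ω x, ω y⟫_ℝ)
      (integrable_pairing_comp_inner hh hω hω1 (φ := fun t => (1 - t) * log (1 - t))
        (continuous_mul_log.comp (continuous_sub_left 1)))
      (integrable_pairing_comp_inner hh hω hω1 continuous_id),
    pairing_inner_eq_norm_sq hh hω hω1, hcentered, norm_zero] at hnonneg
  simpa using hnonneg

end PositiveKernels

/-! ### Stereographic projection -/

section Stereographic

variable {V : Type*} [NormedAddCommGroup V]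

/-- A quarter of the squared Euclidean distance between the inverse stereographic images of two
points. -/
def chordSq (x y : V) : ℝ := ‖x - y‖ ^ 2 / ((1 + ‖x‖ ^ 2) * (1 + ‖y‖ ^ 2))

lemma chordSq_comm (x y : V) : chordSq x y = chordSq y x := by
  rw [chordSq, chordSq, norm_sub_rev, mul_comm (1 + ‖x‖ ^ 2)]

lemma chordSq_zero_left (x : V) : chordSq 0 x = ‖x‖ ^ 2 / (1 + ‖x‖ ^ 2) := by
  simp [chordSq]

lemma one_sub_chordSq_zero_left (x : V) : 1 - chordSq 0 x = (1 + ‖x‖ ^ 2)⁻¹ := by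
  rw [chordSq_zero_left]
  field_simp
  ring

lemma continuous_chordSq : Continuous fun p : V × V => chordSq p.1 p.2 := by
  unfold chordSq
  fun_prop (disch := intros; positivity)

variable [InnerProductSpace ℝ V]

/-- Inverse stereographic projection onto the unit sphere of `V × ℝ`; the origin is sent to the
pole `(0, 1)`. -/
def invStereo (x : V) : WithLp 2 (V × ℝ) :=
  WithLp.toLp 2 ((2 / (1 + ‖x‖ ^ 2)) • x, (1 - ‖x‖ ^ 2) / (1 + ‖x‖ ^ 2))

lemma inner_invStereo (x y : V) : ⟪invStereo x, invStereo y⟫_ℝ = 1 - 2 * chordSq x y := by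
  simp only [invStereo, chordSq, WithLp.prod_inner_apply, real_inner_smul_left,
    real_inner_smul_right, RCLike.inner_apply, conj_trivial, norm_sub_sq_real]
  field_simp
  ring

lemma norm_invStereo (x : V) : ‖invStereo x‖ = 1 := by
  rw [← sq_eq_sq₀ (norm_nonneg _) zero_le_one, ← real_inner_self_eq_norm_sq, inner_invStereo]
  simp [chordSq]

lemma continuous_invStereo : Continuous (invStereo : V → WithLp 2 (V × ℝ)) := by
  unfold invStereo
  fun_prop (disch := intros; positivity)

lemma one_add_norm_inversion_sq {c x : V} (hx : x ≠ c) {R : ℝ} (hR : R ^ 2 = 1 + ‖c‖ ^ 2) :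
    1 + ‖inversion c R x‖ ^ 2 = R ^ 2 * (1 + ‖x‖ ^ 2) / dist x c ^ 2 := by
  have hdist : dist x c ^ 2 = ‖x‖ ^ 2 - 2 * ⟪x, c⟫_ℝ + ‖c‖ ^ 2 := by
    rw [dist_eq_norm, norm_sub_sq_real]
  have hpos : dist x c ≠ 0 := dist_ne_zero.mpr hx
  rw [inversion, vsub_eq_sub, vadd_eq_add, norm_add_sq_real, norm_smul, real_inner_smul_left,
    inner_sub_left, real_inner_self_eq_norm_sq, mul_pow, ← dist_eq_norm, div_pow,
    norm_of_nonneg (by positivity)]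
  field_simp
  rw [hR, hdist]
  ring

lemma chordSq_inversion {c x y : V} (hx : x ≠ c) (hy : y ≠ c) {R : ℝ}
    (hR : R ^ 2 = 1 + ‖c‖ ^ 2) :
    chordSq (inversion c R x) (inversion c R y) = chordSq x y := by
  have hx' : dist x c ≠ 0 := dist_ne_zero.mpr hx
  have hy' : dist y c ≠ 0 := dist_ne_zero.mpr hy
  have hR' : R ≠ 0 := by
    rintro rfl
    nlinarith [sq_nonneg ‖c‖]
  rw [chordSq, chordSq, one_add_norm_inversion_sq hx hR, one_add_norm_inversion_sq hy hR,
    ← dist_eq_norm, dist_inversion_inversion hx hy, ← dist_eq_norm]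
  field_simp

lemma exists_inversion_zero_eq {b : V} (hb : b ≠ 0) :
    ∃ c : V, ∃ R : ℝ, c ≠ 0 ∧ R ^ 2 = 1 + ‖c‖ ^ 2 ∧ inversion c R 0 = b := by
  have hb' : ‖b‖ ≠ 0 := norm_ne_zero_iff.mpr hb
  refine ⟨-(‖b‖ ^ 2)⁻¹ • b, √(1 + ‖-(‖b‖ ^ 2)⁻¹ • b‖ ^ 2), by simpa using hb,
    sq_sqrt (by positivity), ?_⟩
  rw [inversion, div_pow, sq_sqrt (by positivity), dist_eq_norm, norm_sub_rev, sub_zero,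
    vsub_eq_sub, vadd_eq_add, zero_sub, norm_smul, norm_neg, norm_inv, norm_pow, norm_norm,
    neg_smul, neg_neg, smul_smul, ← sub_eq_add_neg, ← sub_smul]
  convert one_smul ℝ b
  field_simp
  ring

variable [FiniteDimensional ℝ V] [MeasurableSpace V] [BorelSpace V]

lemma integral_comp_inversion [Nontrivial V] (c : V) {R : ℝ} (hR : R ≠ 0) (g : V → ℝ) :
    ∫ x, ((R / dist x c) ^ 2) ^ finrank ℝ V * g (inversion c R x) = ∫ x, g x := by
  have himage : inversion c R '' {c}ᶜ = {c}ᶜ := by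
    rw [Set.image_compl_eq (inversion_bijective c hR), Set.image_singleton, inversion_self]
  have hdet : ∀ x : V, |((R / dist x c) ^ 2 • ((ℝ ∙ (x - c))ᗮ.reflection : V →L[ℝ] V)).det| =
      ((R / dist x c) ^ 2) ^ finrank ℝ V := by
    intro x
    have hrefl : |LinearMap.det (ℝ ∙ (x - c))ᗮ.reflection.toLinearMap| = 1 := by
      rw [Submodule.det_reflection, abs_pow, abs_neg, abs_one, one_pow]
    rw [ContinuousLinearMap.det, ContinuousLinearMap.toLinearMap_smul, LinearMap.det_smul,
      abs_mul, abs_of_nonneg (by positivity)]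
    exact (congrArg _ hrefl).trans (mul_one _)
  have := integral_image_eq_integral_abs_det_fderiv_smul volume
    (measurableSet_singleton c).compl
    (fun x hx => (hasFDerivAt_inversion (R := R) hx).hasFDerivWithinAt)
    (inversion_injective c hR).injOn g
  simpa only [himage, hdet, smul_eq_mul, restrict_compl_singleton] using this.symm

end Stereographic

/-! ### The spherical measure -/

section SphericalMeasure

/-- The image of the uniform probability measure of the sphere under stereographic projection. -/
def sphMeasure : Measure E2 := volume.withDensity fun x => ENNReal.ofReal (mu2 x)

lemma mu2_pos (x : E2) : 0 < mu2 x := by unfold mu2; positivity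

lemma continuous_mu2 : Continuous mu2 := by
  unfold mu2
  fun_prop (disch := intros; positivity)

lemma integral_sphMeasure {F : Type*} [NormedAddCommGroup F] [NormedSpace ℝ F] (g : E2 → F) :
    ∫ x, g x ∂sphMeasure = ∫ x, mu2 x • g x := by
  rw [sphMeasure, integral_withDensity_eq_integral_toReal_smul (by have := continuous_mu2; fun_prop)
    (by simp)]
  simp only [ENNReal.toReal_ofReal (mu2_pos _).le]

lemma integral_Ioo_eq_integral_Ioi (f : ℝ → ℝ) :
    ∫ u in Set.Ioo 0 1, f u =
      ∫ r in Set.Ioi 0, 2 * r / (1 + r ^ 2) ^ 2 * f (r ^ 2 / (1 + r ^ 2)) := by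
  let g : ℝ → ℝ := fun r => r ^ 2 / (1 + r ^ 2)
  have himage : g '' Set.Ioi 0 = Set.Ioo 0 1 := by
    ext u
    refine ⟨?_, fun ⟨h0, h1⟩ => ⟨√(u / (1 - u)), ?_⟩⟩
    · rintro ⟨r, hr : 0 < r, rfl⟩
      exact ⟨by positivity, (div_lt_one (by positivity)).mpr (lt_one_add _)⟩
    · have : 0 < 1 - u := sub_pos.mpr h1
      refine ⟨sqrt_pos.mpr (by positivity), ?_⟩
      simp only [g]
      rw [sq_sqrt (by positivity)]
      field_simp
      ring
  have hderiv : ∀ r ∈ Set.Ioi (0 : ℝ),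
      HasDerivWithinAt g (2 * r / (1 + r ^ 2) ^ 2) (Set.Ioi 0) r := by
    intro r _
    have hsq := hasDerivAt_pow 2 r
    refine ((hsq.fun_div (hsq.const_add 1) (by positivity)).congr_deriv ?_).hasDerivWithinAt
    norm_num
    ring
  have hinj : Set.InjOn g (Set.Ioi 0) := by
    intro r (hr : 0 < r) s (hs : 0 < s) hrs
    rw [div_eq_div_iff (by positivity) (by positivity)] at hrs
    exact (sq_eq_sq₀ hr.le hs.le).mp (by linarith)
  rw [← himage, integral_image_eq_integral_abs_deriv_smul measurableSet_Ioi hderiv hinj]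
  refine setIntegral_congr_fun measurableSet_Ioi fun r (hr : 0 < r) => ?_
  rw [abs_of_pos (by positivity), smul_eq_mul]

lemma integral_comp_chordSq_zero (f : ℝ → ℝ) :
    ∫ x : E2, f (chordSq 0 x) ∂sphMeasure = ∫ u in Set.Ioo 0 1, f u := by
  simp only [integral_sphMeasure, chordSq_zero_left, mu2]
  rw [integral_Ioo_eq_integral_Ioi, integral_fun_norm_addHaar volume fun r =>
      (1 / (π * (1 + r ^ 2) ^ 2)) • f (r ^ 2 / (1 + r ^ 2)), finrank_euclideanSpace_fin,
    measureReal_def, EuclideanSpace.volume_ball_fin_two, nsmul_eq_mul, ← integral_smul,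
    ← integral_const_mul]
  congr with r
  simp only [smul_eq_mul, ENNReal.ofReal_one, one_pow, one_mul, ENNReal.toReal_ofReal pi_pos.le,
    Nat.cast_ofNat, Nat.add_one_sub_one, pow_one]
  field_simp

lemma integral_comp_chordSq (b : E2) (f : ℝ → ℝ) :
    ∫ x, f (chordSq b x) ∂sphMeasure = ∫ u in Set.Ioo 0 1, f u := by
  rw [← integral_comp_chordSq_zero]
  rcases eq_or_ne b 0 with rfl | hb
  · rfl
  obtain ⟨c, R, hc, hR, rfl⟩ := exists_inversion_zero_eq hb
  have hR0 : R ≠ 0 := by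
    rintro rfl
    nlinarith [sq_nonneg ‖c‖]
  rw [integral_sphMeasure, integral_sphMeasure, ← integral_comp_inversion c hR0]
  refine integral_congr_ae ?_
  filter_upwards [compl_mem_ae_iff.mpr (measure_singleton c)] with x (hx : x ≠ c)
  have hdist : dist x c ≠ 0 := dist_ne_zero.mpr hx
  rw [chordSq_inversion hc.symm hx hR, smul_eq_mul, smul_eq_mul, ← mul_assoc]
  congr 1
  rw [mu2, mu2, one_add_norm_inversion_sq hx hR, finrank_euclideanSpace_fin]
  field_simp

instance : IsProbabilityMeasure sphMeasure := by
  have h := integral_comp_chordSq 0 fun _ => 1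
  simp only [integral_const, smul_eq_mul, mul_one, measureReal_restrict_apply_univ,
    volume_real_Ioo_of_le zero_le_one, sub_zero] at h
  exact ⟨(ENNReal.toReal_eq_one_iff _).mp h⟩

lemma measurePreserving_chordSq (b : E2) :
    MeasurePreserving (chordSq b) sphMeasure (volume.restrict (Set.Ioo 0 1)) := by
  have hmeas : Measurable (chordSq b) := (continuous_chordSq.comp (.prodMk_right b)).measurable
  have := Measure.isFiniteMeasure_map sphMeasure (chordSq b)
  refine ⟨hmeas, ext_of_forall_integral_eq_of_IsFiniteMeasure fun f => ?_⟩
  rw [integral_map hmeas.aemeasurable f.continuous.aestronglyMeasurable, integral_comp_chordSq]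

lemma measurePreserving_fst_chordSq :
    MeasurePreserving (fun p : E2 × E2 => (p.1, chordSq p.1 p.2))
      (sphMeasure.prod sphMeasure) (sphMeasure.prod (volume.restrict (Set.Ioo 0 1))) :=
  (MeasurePreserving.id sphMeasure).skew_product continuous_chordSq.measurable
    (ae_of_all _ fun x => (measurePreserving_chordSq x).map_eq)

lemma ae_chordSq_mem_Ioo :
    ∀ᵐ p : E2 × E2 ∂(sphMeasure.prod sphMeasure), chordSq p.1 p.2 ∈ Set.Ioo 0 1 :=
  measurePreserving_fst_chordSq.quasiMeasurePreserving.ae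
    (Measure.quasiMeasurePreserving_snd.ae (ae_restrict_mem measurableSet_Ioo))

lemma integrable_mul_comp_chordSq {ρ : E2 → ℝ} (hρ : Integrable ρ sphMeasure) {K : ℝ → ℝ}
    (hK : IntegrableOn K (Set.Ioo 0 1)) :
    Integrable (fun p : E2 × E2 => ρ p.1 * K (chordSq p.1 p.2)) (sphMeasure.prod sphMeasure) :=
  measurePreserving_fst_chordSq.integrable_comp_of_integrable (hρ.mul_prod hK)

lemma integral_mul_comp_chordSq {ρ : E2 → ℝ} (hρ : Integrable ρ sphMeasure) {K : ℝ → ℝ}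
    (hK : IntegrableOn K (Set.Ioo 0 1)) :
    ∫ p : E2 × E2, ρ p.1 * K (chordSq p.1 p.2) ∂(sphMeasure.prod sphMeasure) =
      (∫ x, ρ x ∂sphMeasure) * ∫ u in Set.Ioo 0 1, K u := by
  rw [← integral_prod_mul, ← measurePreserving_fst_chordSq.map_eq,
    integral_map measurePreserving_fst_chordSq.aemeasurable]
  rw [measurePreserving_fst_chordSq.map_eq]
  exact (hρ.mul_prod hK).aestronglyMeasurable

lemma sub_one_mul_sub_one_mul_chordSq (ρ : E2 → ℝ) (K : ℝ → ℝ) (x y : E2) :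
    (ρ x - 1) * (ρ y - 1) * K (chordSq x y) =
      ρ x * ρ y * K (chordSq x y) - ρ x * K (chordSq x y) - ρ y * K (chordSq y x) +
        1 * K (chordSq x y) := by
  rw [chordSq_comm y]
  ring

lemma integrable_sub_one_mul_sub_one_mul_chordSq {ρ : E2 → ℝ} (hρ : Integrable ρ sphMeasure)
    {K : ℝ → ℝ} (hK : IntegrableOn K (Set.Ioo 0 1))
    (hρK : Integrable (fun p : E2 × E2 => ρ p.1 * ρ p.2 * K (chordSq p.1 p.2))
      (sphMeasure.prod sphMeasure)) :
    Integrable (fun p : E2 × E2 => (ρ p.1 - 1) * (ρ p.2 - 1) * K (chordSq p.1 p.2))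
      (sphMeasure.prod sphMeasure) := by
  have hfst := integrable_mul_comp_chordSq hρ hK
  simp only [sub_one_mul_sub_one_mul_chordSq]
  exact ((hρK.sub hfst).sub hfst.swap).add (integrable_mul_comp_chordSq (integrable_const 1) hK)

lemma pairing_sub_one {ρ : E2 → ℝ} (hρ : Integrable ρ sphMeasure)
    (hmass : ∫ x, ρ x ∂sphMeasure = 1) {K : ℝ → ℝ} (hK : IntegrableOn K (Set.Ioo 0 1))
    (hρK : Integrable (fun p : E2 × E2 => ρ p.1 * ρ p.2 * K (chordSq p.1 p.2))
      (sphMeasure.prod sphMeasure)) :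
    pairing sphMeasure (fun x => ρ x - 1) (fun x y => K (chordSq x y)) =
      pairing sphMeasure ρ (fun x y => K (chordSq x y)) - ∫ u in Set.Ioo 0 1, K u := by
  have hfst := integrable_mul_comp_chordSq hρ hK
  have hone := integrable_mul_comp_chordSq (integrable_const 1) hK
  have hsnd : Integrable (fun p : E2 × E2 => ρ p.2 * K (chordSq p.2 p.1))
    (sphMeasure.prod sphMeasure) := hfst.swap
  have hsnd_eq := integral_prod_swap (μ := sphMeasure) (ν := sphMeasure)
    fun p : E2 × E2 => ρ p.1 * K (chordSq p.1 p.2)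
  simp only [Prod.fst_swap, Prod.snd_swap] at hsnd_eq
  simp only [pairing, sub_one_mul_sub_one_mul_chordSq]
  rw [integral_add (by exact (hρK.sub hfst).sub hsnd) hone,
    integral_sub (by exact hρK.sub hfst) hsnd, integral_sub hρK hfst, hsnd_eq,
    integral_mul_comp_chordSq hρ hK, integral_mul_comp_chordSq (integrable_const 1) hK, hmass,
    integral_const, probReal_univ]
  simp

lemma integrable_invStereo : Integrable (invStereo : E2 → _) sphMeasure :=
  .of_bound continuous_invStereo.aestronglyMeasurable 1 (ae_of_all _ fun x => (norm_invStereo x).le)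

lemma integral_invStereo : ∫ x : E2, invStereo x ∂sphMeasure = 0 := by
  set v := ∫ x : E2, invStereo x ∂sphMeasure
  have horth : ∀ x : E2, ⟪invStereo x, v⟫_ℝ = 0 := by
    intro x
    rw [← integral_inner integrable_invStereo]
    simp only [inner_invStereo]
    rw [integral_comp_chordSq x fun u => 1 - 2 * u, integral_one_sub_two_mul_Ioo]
  have hself : ⟪v, v⟫_ℝ = ∫ x, ⟪v, invStereo x⟫_ℝ ∂sphMeasure :=
    (integral_inner integrable_invStereo v).symm
  simpa only [real_inner_comm, horth, integral_zero, inner_self_eq_zero] using hself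

end SphericalMeasure

/-! ### Free energy -/

section FreeEnergy

variable {X : Type*} [MeasurableSpace X] {m : Measure X} {ρ : X → ℝ}

/-- The entropy `∫ ρ log ρ dm` of a density `ρ` relative to the reference measure `m`. -/
def entropy (m : Measure X) (ρ : X → ℝ) : ℝ := ∫ x, ρ x * log (ρ x) ∂m

/-- The free energy of a density: its entropy plus its interaction energy for the kernel `K`. -/
def freeEnergy (m : Measure X) (K : X → X → ℝ) (ρ : X → ℝ) : ℝ := entropy m ρ + pairing m ρ K

/-- Probability densities of finite entropy relative to `m`. Integrability is not a field: it
follows from `mass`, a nonintegrable function having Bochner integral `0`. -/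
structure IsEntropyDensity (m : Measure X) (ρ : X → ℝ) : Prop where
  nonneg : 0 ≤ᵐ[m] ρ
  mass : ∫ x, ρ x ∂m = 1
  mul_log : Integrable (fun x => ρ x * log (ρ x)) m

lemma IsEntropyDensity.integrable (hρ : IsEntropyDensity m ρ) : Integrable ρ m :=
  .of_integral_ne_zero (by rw [hρ.mass]; exact one_ne_zero)

lemma IsEntropyDensity.entropy_nonneg [IsProbabilityMeasure m] (hρ : IsEntropyDensity m ρ) :
    0 ≤ entropy m ρ := by
  have h : ∫ x, (ρ x - 1) ∂m ≤ entropy m ρ := by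
    refine integral_mono_ae (hρ.integrable.sub (integrable_const 1)) hρ.mul_log ?_
    filter_upwards [hρ.nonneg] with x hx
    have := mul_le_mul_log_sub_add_exp hx 0
    simp only [mul_zero, exp_zero] at this
    linarith
  rwa [integral_sub hρ.integrable (integrable_const 1), hρ.mass, integral_const, probReal_univ,
    one_smul, sub_self] at h

lemma norm_mul_log_le {a u : ℝ} (ha : 0 ≤ a) (hu : u ∈ Set.Ioo 0 1) :
    ‖a * log u‖ ≤ 2 * (a * log a - a + u ^ (-(1 / 2) : ℝ)) := by
  have h := mul_le_mul_log_sub_add_exp ha (log u * -(1 / 2))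
  rw [← rpow_def_of_pos hu.1] at h
  rw [norm_of_nonpos (mul_nonpos_of_nonneg_of_nonpos ha (log_nonpos hu.1.le hu.2.le))]
  linarith

lemma ae_mem_Ioo_of_measurePreserving {u : X → ℝ}
    (hu : MeasurePreserving u m (volume.restrict (Set.Ioo 0 1))) : ∀ᵐ x ∂m, u x ∈ Set.Ioo 0 1 :=
  hu.quasiMeasurePreserving.ae (ae_restrict_mem measurableSet_Ioo)

lemma IsEntropyDensity.integrable_mul_log_uniform (hρ : IsEntropyDensity m ρ) {u : X → ℝ}
    (hu : MeasurePreserving u m (volume.restrict (Set.Ioo 0 1))) :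
    Integrable (fun x => ρ x * log (u x)) m := by
  refine (((hρ.mul_log.sub hρ.integrable).add
    (hu.integrable_comp_of_integrable integrableOn_rpow_neg_half_Ioo)).const_mul 2).mono'
    (hρ.integrable.aestronglyMeasurable.mul
      (measurable_log.comp hu.measurable).aestronglyMeasurable) ?_
  filter_upwards [hρ.nonneg, ae_mem_Ioo_of_measurePreserving hu] with x hx hux
  exact norm_mul_log_le hx hux

lemma IsEntropyDensity.neg_le_integral_mul_log_uniform (hρ : IsEntropyDensity m ρ) {u : X → ℝ}
    (hu : MeasurePreserving u m (volume.restrict (Set.Ioo 0 1))) :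
    -(2 * entropy m ρ + 2) ≤ ∫ x, ρ x * log (u x) ∂m := by
  have hpow := hu.integrable_comp_of_integrable integrableOn_rpow_neg_half_Ioo
  have hpow_eq : ∫ x, u x ^ (-(1 / 2) : ℝ) ∂m = 2 := by
    refine Eq.trans ?_ integral_rpow_neg_half_Ioo
    rw [← hu.map_eq, integral_map hu.aemeasurable (by fun_prop)]
  have hle : ∫ x, -(2 * (ρ x * log (ρ x) - ρ x + u x ^ (-(1 / 2) : ℝ))) ∂m ≤
      ∫ x, ρ x * log (u x) ∂m := by
    refine integral_mono_ae (((hρ.mul_log.sub hρ.integrable).add hpow).const_mul 2).neg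
      (hρ.integrable_mul_log_uniform hu) ?_
    filter_upwards [hρ.nonneg, ae_mem_Ioo_of_measurePreserving hu] with x hx hux
    exact neg_le.mp ((neg_le_abs _).trans (norm_mul_log_le hx hux))
  rw [integral_neg, integral_const_mul, integral_add (by exact hρ.mul_log.sub hρ.integrable)
    (by exact hpow), integral_sub hρ.mul_log hρ.integrable, hρ.mass, hpow_eq] at hle
  rw [entropy]
  linarith

lemma integrable_mul_one_add_mul_log (hρ : Integrable ρ m) {a : X → ℝ} (ha : Measurable a)
    (ha1 : ∀ x, |a x| ≤ 1) :
    Integrable (fun x => ρ x * ((1 + a x) * log (1 + a x))) m := by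
  obtain ⟨C, hC⟩ := (isCompact_Icc (a := (-1 : ℝ)) (b := 1)).exists_bound_of_continuousOn
    (continuous_mul_log.comp (continuous_const_add 1)).continuousOn
  exact hρ.mul_bdd (c := C) (by fun_prop) (ae_of_all _ fun x => hC _ (abs_le.mp (ha1 x)))

lemma integrable_mul_one_add {g : X → ℝ} (hg : Integrable g m) {a : X → ℝ} (ha : Measurable a)
    (ha1 : ∀ x, |a x| ≤ 1) : Integrable (fun x => g x * (1 + a x)) m := by
  simp only [mul_add, mul_one]
  exact hg.add (hg.mul_bdd ha.aestronglyMeasurable (ae_of_all _ ha1))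

lemma IsEntropyDensity.mul_one_add (hρ : IsEntropyDensity m ρ) {a : X → ℝ} (ha : Measurable a)
    (ha1 : ∀ x, |a x| ≤ 1) (hρa : ∫ x, ρ x * a x ∂m = 0) :
    IsEntropyDensity m fun x => ρ x * (1 + a x) where
  nonneg := by
    filter_upwards [hρ.nonneg] with x hx
    exact mul_nonneg hx (by linarith [(abs_le.mp (ha1 x)).1])
  mass := by
    simp only [mul_add, mul_one]
    rw [integral_add hρ.integrable (hρ.integrable.mul_bdd ha.aestronglyMeasurable
      (ae_of_all _ ha1)), hρ.mass, hρa, add_zero]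
  mul_log := by
    simp only [mul_mul_log_mul]
    exact (integrable_mul_one_add hρ.mul_log ha ha1).add
      (integrable_mul_one_add_mul_log hρ.integrable ha ha1)

lemma IsEntropyDensity.entropy_mul_one_add (hρ : IsEntropyDensity m ρ) {a : X → ℝ}
    (ha : Measurable a) (ha1 : ∀ x, |a x| ≤ 1) :
    entropy m (fun x => ρ x * (1 + a x)) = (∫ x, ρ x * log (ρ x) * (1 + a x) ∂m) +
      ∫ x, ρ x * ((1 + a x) * log (1 + a x)) ∂m := by
  simp only [entropy, mul_mul_log_mul]
  exact integral_add (integrable_mul_one_add hρ.mul_log ha ha1)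
    (integrable_mul_one_add_mul_log hρ.integrable ha ha1)

lemma IsEntropyDensity.entropy_mul_one_add_add_le (hρ : IsEntropyDensity m ρ) {a : X → ℝ}
    (ha : Measurable a) (ha1 : ∀ x, |a x| ≤ 1) :
    entropy m (fun x => ρ x * (1 + a x)) + entropy m (fun x => ρ x * (1 + -a x)) ≤
      2 * entropy m ρ + ∫ x, ρ x * (a x ^ 2 + a x ^ 4) ∂m := by
  have ha' : Measurable fun x => -a x := ha.neg
  have ha1' : ∀ x, |-a x| ≤ 1 := by simpa only [abs_neg] using ha1
  have hlog := integrable_mul_one_add hρ.mul_log ha ha1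
  have hlog' := integrable_mul_one_add hρ.mul_log ha' ha1'
  have hent := integrable_mul_one_add_mul_log hρ.integrable ha ha1
  have hent' := integrable_mul_one_add_mul_log hρ.integrable ha' ha1'
  have hpow : Integrable (fun x => ρ x * (a x ^ 2 + a x ^ 4)) m := by
    refine hρ.integrable.mul_bdd (c := 2) (by fun_prop) (ae_of_all _ fun x => ?_)
    rw [norm_of_nonneg (by positivity)]
    nlinarith [(sq_le_one_iff_abs_le_one _).mpr (ha1 x), sq_nonneg (a x)]
  have hcancel : (∫ x, ρ x * log (ρ x) * (1 + a x) ∂m) +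
      ∫ x, ρ x * log (ρ x) * (1 + -a x) ∂m = 2 * entropy m ρ := by
    rw [← integral_add hlog (by exact hlog'), entropy, ← integral_const_mul]
    congr with x
    ring
  have hle : (∫ x, ρ x * ((1 + a x) * log (1 + a x)) ∂m) +
      ∫ x, ρ x * ((1 + -a x) * log (1 + -a x)) ∂m ≤ ∫ x, ρ x * (a x ^ 2 + a x ^ 4) ∂m := by
    rw [← integral_add hent (by exact hent')]
    refine integral_mono_ae (hent.add hent') hpow ?_
    filter_upwards [hρ.nonneg] with x hx
    simp only [← mul_add, ← sub_eq_add_neg]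
    exact mul_le_mul_of_nonneg_left (one_add_mul_log_add_one_sub_mul_log_le (ha1 x)) hx
  rw [hρ.entropy_mul_one_add ha ha1, hρ.entropy_mul_one_add ha' ha1']
  linarith

lemma pairing_mul_one_add_add {a : X → ℝ} (ha : Measurable a) (ha1 : ∀ x, |a x| ≤ 1)
    {K : X → X → ℝ} (hK : Integrable (fun p : X × X => ρ p.1 * ρ p.2 * K p.1 p.2) (m.prod m)) :
    pairing m (fun x => ρ x * (1 + a x)) K + pairing m (fun x => ρ x * (1 + -a x)) K =
      2 * (pairing m ρ K + pairing m ρ fun x y => a x * a y * K x y) := by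
  have hbdd : ∀ {b : X → ℝ}, Measurable b → (∀ x, |b x| ≤ 2) →
      Integrable (fun p : X × X => ρ p.1 * ρ p.2 * K p.1 p.2 * (b p.1 * b p.2)) (m.prod m) := by
    intro b hb hb2
    refine hK.mul_bdd (c := 2 * 2) (by fun_prop) (ae_of_all _ fun p => ?_)
    rw [norm_mul]
    exact mul_le_mul (hb2 _) (hb2 _) (norm_nonneg _) zero_le_two
  have hplus := hbdd (ha.const_add 1) fun x => by
    linarith [abs_add_le 1 (a x), ha1 x, abs_one (α := ℝ)]
  have hminus := hbdd (ha.const_sub 1) fun x => by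
    linarith [abs_sub 1 (a x), ha1 x, abs_one (α := ℝ)]
  have hprod := hbdd ha fun x => (ha1 x).trans one_le_two
  simp only [pairing]
  rw [← integral_add hK (by convert hprod using 2; ring), ← integral_const_mul,
    ← integral_add (by convert hplus using 2; ring) (by convert hminus using 2; ring)]
  congr with p
  ring

lemma IsEntropyDensity.two_mul_le_of_forall_le_freeEnergy (hρ : IsEntropyDensity m ρ)
    {K : X → X → ℝ} (hK : Integrable (fun p : X × X => ρ p.1 * ρ p.2 * K p.1 p.2) (m.prod m))
    {Λ : ℝ} (hΛ : ∀ ρ', IsEntropyDensity m ρ' → Λ ≤ freeEnergy m K ρ')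
    {a : X → ℝ} (ha : Measurable a) (ha1 : ∀ x, |a x| ≤ 1) (hρa : ∫ x, ρ x * a x ∂m = 0) :
    2 * Λ ≤ 2 * freeEnergy m K ρ + (∫ x, ρ x * (a x ^ 2 + a x ^ 4) ∂m) +
      2 * pairing m ρ fun x y => a x * a y * K x y := by
  have hplus := hΛ _ (hρ.mul_one_add ha ha1 hρa)
  have hminus := hΛ _ (hρ.mul_one_add ha.neg (by simpa using ha1)
    (by simpa [integral_neg] using hρa))
  simp only [freeEnergy] at hplus hminus ⊢
  have hent := hρ.entropy_mul_one_add_add_le ha ha1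
  have hpair := pairing_mul_one_add_add ha ha1 hK
  simp only [Pi.neg_apply] at hminus
  linarith

end FreeEnergy

/-! ### Perturbation by linear functions -/

section Perturbation

variable {X W : Type*} [MeasurableSpace X] {m : Measure X} {ρ : X → ℝ}
  [NormedAddCommGroup W] [InnerProductSpace ℝ W]

lemma abs_inner_le_one_of_norm_eq_one {e v : W} (he : ‖e‖ = 1) (hv : ‖v‖ = 1) :
    |⟪e, v⟫_ℝ| ≤ 1 :=
  (abs_real_inner_le_norm e v).trans_eq (by rw [he, hv, one_mul])

variable [MeasurableSpace W] [BorelSpace W] [SecondCountableTopology W] {ω : X → W}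

lemma integrable_mul_inner_sq (hρ : Integrable ρ m) (hω : Measurable ω) (hω1 : ∀ x, ‖ω x‖ = 1)
    {e : W} (he : ‖e‖ = 1) : Integrable (fun x => ρ x * ⟪e, ω x⟫_ℝ ^ 2) m := by
  refine hρ.mul_bdd (c := 1) (by fun_prop) (ae_of_all _ fun x => ?_)
  rw [norm_pow]
  exact pow_le_one₀ (norm_nonneg _) (abs_inner_le_one_of_norm_eq_one he (hω1 x))

lemma sum_integral_mul_inner_sq {ι : Type*} [Fintype ι] (b : OrthonormalBasis ι ℝ W)
    (hρ : Integrable ρ m) (hω : Measurable ω) (hω1 : ∀ x, ‖ω x‖ = 1) :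
    ∑ i, ∫ x, ρ x * ⟪b i, ω x⟫_ℝ ^ 2 ∂m = ∫ x, ρ x ∂m := by
  rw [← integral_finsetSum _ fun i _ => integrable_mul_inner_sq hρ hω hω1 (b.norm_eq_one i)]
  simp only [← Finset.mul_sum, b.sum_sq_inner_right, hω1, one_pow, mul_one]

lemma sum_pairing_inner_mul_inner {ι : Type*} [Fintype ι] (b : OrthonormalBasis ι ℝ W)
    (hω : Measurable ω) (hω1 : ∀ x, ‖ω x‖ = 1) {K : X → X → ℝ}
    (hK : Integrable (fun p : X × X => ρ p.1 * ρ p.2 * K p.1 p.2) (m.prod m)) :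
    ∑ i, pairing m ρ (fun x y => ⟪b i, ω x⟫_ℝ * ⟪b i, ω y⟫_ℝ * K x y) =
      pairing m ρ fun x y => ⟪ω x, ω y⟫_ℝ * K x y := by
  have hint : ∀ i, Integrable (fun p : X × X =>
      ρ p.1 * ρ p.2 * (⟪b i, ω p.1⟫_ℝ * ⟪b i, ω p.2⟫_ℝ * K p.1 p.2)) (m.prod m) := by
    intro i
    have hb := fun x => abs_inner_le_one_of_norm_eq_one (b.norm_eq_one i) (hω1 x)
    refine (hK.mul_bdd (c := 1) (g := fun p : X × X => ⟪b i, ω p.1⟫_ℝ * ⟪b i, ω p.2⟫_ℝ)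
      (by fun_prop) (ae_of_all _ fun p => ?_)).congr (ae_of_all _ fun p => by simp only; ring)
    rw [norm_mul]
    exact mul_le_one₀ (hb p.1) (norm_nonneg _) (hb p.2)
  simp only [pairing]
  rw [← integral_finsetSum _ fun i _ => hint i]
  congr with p
  rw [← Finset.mul_sum, ← Finset.sum_mul, ← b.sum_inner_mul_inner (ω p.1) (ω p.2)]
  simp only [real_inner_comm]

lemma IsEntropyDensity.two_mul_le_of_inner (hρ : IsEntropyDensity m ρ) (hω : Measurable ω)
    (hω1 : ∀ x, ‖ω x‖ = 1) [CompleteSpace W] (hcentered : ∫ x, ρ x • ω x ∂m = 0) {K : X → X → ℝ}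
    (hK : Integrable (fun p : X × X => ρ p.1 * ρ p.2 * K p.1 p.2) (m.prod m)) {Λ : ℝ}
    (hΛ : ∀ ρ', IsEntropyDensity m ρ' → Λ ≤ freeEnergy m K ρ') {s : ℝ} (hs : |s| ≤ 1)
    {e : W} (he : ‖e‖ = 1) :
    2 * Λ ≤ 2 * freeEnergy m K ρ + (s ^ 2 + s ^ 4) * (∫ x, ρ x * ⟪e, ω x⟫_ℝ ^ 2 ∂m) +
      2 * s ^ 2 * pairing m ρ fun x y => ⟪e, ω x⟫_ℝ * ⟪e, ω y⟫_ℝ * K x y := by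
  have hinner := fun x => abs_inner_le_one_of_norm_eq_one he (hω1 x)
  have hmean : ∫ x, ρ x * (s * ⟪e, ω x⟫_ℝ) ∂m = 0 := by
    have hvec : Integrable (fun x => ρ x • ω x) m :=
      hρ.integrable.smul_bdd 1 hω.aestronglyMeasurable (ae_of_all _ fun x => (hω1 x).le)
    have h := integral_inner (𝕜 := ℝ) hvec e
    rw [hcentered, inner_zero_right] at h
    simp only [real_inner_smul_right] at h
    simp only [mul_left_comm _ s, integral_const_mul, h, mul_zero]
  have hΛ' := hρ.two_mul_le_of_forall_le_freeEnergy hK hΛ (a := fun x => s * ⟪e, ω x⟫_ℝ)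
    (by fun_prop) (fun x => by rw [abs_mul]; exact mul_le_one₀ hs (abs_nonneg _) (hinner x)) hmean
  have hsecond : ∫ x, ρ x * ((s * ⟪e, ω x⟫_ℝ) ^ 2 + (s * ⟪e, ω x⟫_ℝ) ^ 4) ∂m ≤
      (s ^ 2 + s ^ 4) * ∫ x, ρ x * ⟪e, ω x⟫_ℝ ^ 2 ∂m := by
    rw [← integral_const_mul]
    refine integral_mono_of_nonneg ?_
      ((integrable_mul_inner_sq hρ.integrable hω hω1 he).const_mul _) ?_
    · filter_upwards [hρ.nonneg] with x hx
      exact mul_nonneg hx (by positivity)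
    · filter_upwards [hρ.nonneg] with x hx
      have h : s ^ 4 * (⟪e, ω x⟫_ℝ ^ 2 * ⟪e, ω x⟫_ℝ ^ 2) ≤ s ^ 4 * (⟪e, ω x⟫_ℝ ^ 2 * 1) := by
        gcongr
        exact (sq_le_one_iff_abs_le_one _).mpr (hinner x)
      nlinarith [mul_le_mul_of_nonneg_left h hx]
  have hscale : pairing m ρ (fun x y => s * ⟪e, ω x⟫_ℝ * (s * ⟪e, ω y⟫_ℝ) * K x y) =
      s ^ 2 * pairing m ρ fun x y => ⟪e, ω x⟫_ℝ * ⟪e, ω y⟫_ℝ * K x y := by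
    simp only [pairing]
    rw [← integral_const_mul]
    congr with p
    ring
  rw [hscale] at hΛ'
  linarith

lemma IsEntropyDensity.two_mul_finrank_mul_sub_le [FiniteDimensional ℝ W]
    (hρ : IsEntropyDensity m ρ) (hω : Measurable ω) (hω1 : ∀ x, ‖ω x‖ = 1)
    (hcentered : ∫ x, ρ x • ω x ∂m = 0) {K : X → X → ℝ}
    (hK : Integrable (fun p : X × X => ρ p.1 * ρ p.2 * K p.1 p.2) (m.prod m)) {Λ : ℝ}
    (hΛ : ∀ ρ', IsEntropyDensity m ρ' → Λ ≤ freeEnergy m K ρ') {s : ℝ} (hs : |s| ≤ 1) :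
    2 * finrank ℝ W * (Λ - freeEnergy m K ρ) ≤
      s ^ 2 + s ^ 4 + 2 * s ^ 2 * pairing m ρ fun x y => ⟪ω x, ω y⟫_ℝ * K x y := by
  have := FiniteDimensional.complete ℝ W
  let b := stdOrthonormalBasis ℝ W
  have hsum := Finset.sum_le_sum fun i (_ : i ∈ Finset.univ) =>
    hρ.two_mul_le_of_inner hω hω1 hcentered hK hΛ hs (b.norm_eq_one i)
  simp only [Finset.sum_add_distrib, ← Finset.mul_sum] at hsum
  rw [sum_integral_mul_inner_sq b hρ.integrable hω hω1, hρ.mass,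
    sum_pairing_inner_mul_inner b hω hω1 hK] at hsum
  simp only [Finset.sum_const, Finset.card_univ, Fintype.card_fin, nsmul_eq_mul] at hsum
  linarith

end Perturbation

/-! ### The logarithmic energy of centered densities -/

section SphericalEnergy

variable {ρ : E2 → ℝ}

/-- The interaction kernel: twice the logarithm of half the chordal distance. -/
abbrev logChord (x y : E2) : ℝ := log (chordSq x y)

lemma chordSq_eq_one_sub_inner (x y : E2) :
    chordSq x y = (1 - ⟪invStereo x, invStereo y⟫_ℝ) / 2 := by
  rw [inner_invStereo]
  ring

lemma integrable_pairing_comp_chordSq {h : E2 → ℝ} (hh : Integrable h sphMeasure) {φ : ℝ → ℝ}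
    (hφ : Continuous φ) :
    Integrable (fun p : E2 × E2 => h p.1 * h p.2 * φ (chordSq p.1 p.2))
      (sphMeasure.prod sphMeasure) := by
  simp only [chordSq_eq_one_sub_inner]
  exact integrable_pairing_comp_inner hh continuous_invStereo.measurable
    (fun x => (norm_invStereo x).le) (φ := fun t => φ ((1 - t) / 2)) (by fun_prop)

lemma pairing_chordSq_mul_log_nonneg {h : E2 → ℝ} (hh : Integrable h sphMeasure)
    (hmean : ∫ x, h x ∂sphMeasure = 0) (hcentered : ∫ x, h x • invStereo x ∂sphMeasure = 0) :
    0 ≤ pairing sphMeasure h fun x y => chordSq x y * log (chordSq x y) := by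
  have hω1 := fun x : E2 => (norm_invStereo x).le
  have hchord : pairing sphMeasure h chordSq = 0 := by
    have hinner := pairing_inner_eq_norm_sq hh continuous_invStereo.measurable hω1
    rw [hcentered, norm_zero, zero_pow two_ne_zero] at hinner
    have hint := integrable_pairing_comp_inner hh continuous_invStereo.measurable hω1 continuous_id
    have hexpand : ∀ p : E2 × E2, h p.1 * h p.2 * chordSq p.1 p.2 =
        (h p.1 * h p.2 - h p.1 * h p.2 * ⟪invStereo p.1, invStereo p.2⟫_ℝ) / 2 := by
      intro p
      rw [chordSq_eq_one_sub_inner]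
      ring
    simp only [pairing] at hinner ⊢
    rw [integral_congr_ae (ae_of_all _ hexpand), integral_div,
      integral_sub (hh.mul_prod hh) (by exact hint), hinner, integral_prod_mul, hmean]
    norm_num
  have hlog := pairing_one_sub_inner_mul_log_nonneg hh continuous_invStereo.measurable hω1 hcentered
  have hkernel : ∀ x y : E2, (1 - ⟪invStereo x, invStereo y⟫_ℝ) *
      log (1 - ⟪invStereo x, invStereo y⟫_ℝ) =
        2 * log 2 * chordSq x y + 2 * (chordSq x y * log (chordSq x y)) := by
    intro x y
    rw [inner_invStereo, sub_sub_cancel, mul_mul_log_mul]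
  simp only [hkernel] at hlog
  rw [pairing_add (K := fun x y => 2 * log 2 * chordSq x y)
    (integrable_pairing_comp_chordSq hh (continuous_const_mul (2 * log 2)))
    (integrable_pairing_comp_chordSq hh (continuous_mul_log.const_mul 2))] at hlog
  simp only [pairing, mul_left_comm _ (2 * log 2), mul_left_comm _ (2 : ℝ), integral_const_mul]
    at hlog hchord ⊢
  rw [hchord] at hlog
  linarith

lemma integrable_smul_invStereo (hρ : Integrable ρ sphMeasure) :
    Integrable (fun x => ρ x • invStereo x) sphMeasure :=
  hρ.smul_bdd 1 continuous_invStereo.aestronglyMeasurable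
    (ae_of_all _ fun x => (norm_invStereo x).le)

lemma IsEntropyDensity.integral_mul_add_inner (hρ : IsEntropyDensity sphMeasure ρ) (c : ℝ)
    (w : WithLp 2 (E2 × ℝ)) :
    ∫ x, ρ x * (c + ⟪w, invStereo x⟫_ℝ) ∂sphMeasure =
      c + ⟪w, ∫ x, ρ x • invStereo x ∂sphMeasure⟫_ℝ := by
  have hbary := integrable_smul_invStereo hρ.integrable
  have hinner : Integrable (fun x => ρ x * ⟪w, invStereo x⟫_ℝ) sphMeasure := by
    simpa only [real_inner_smul_right] using hbary.const_inner (𝕜 := ℝ) w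
  simp only [mul_add]
  rw [integral_add (hρ.integrable.mul_const c) hinner, integral_mul_const, hρ.mass, one_mul,
    ← integral_inner (𝕜 := ℝ) hbary]
  simp only [real_inner_smul_right]

lemma IsEntropyDensity.neg_one_fourth_le_pairing (hρ : IsEntropyDensity sphMeasure ρ)
    (hcentered : ∫ x, ρ x • invStereo x ∂sphMeasure = 0) :
    -1 / 4 ≤ pairing sphMeasure ρ fun x y => chordSq x y * log (chordSq x y) := by
  have hint : IntegrableOn (fun u : ℝ => u * log u) (Set.Ioo 0 1) :=
    (continuous_mul_log.integrableOn_Icc).mono_set Set.Ioo_subset_Icc_self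
  have hnonneg := pairing_chordSq_mul_log_nonneg (h := fun x => ρ x - 1)
    (hρ.integrable.sub (integrable_const 1))
    (by rw [integral_sub hρ.integrable (integrable_const 1), hρ.mass]; simp)
    (by simp only [sub_smul, one_smul]
        rw [integral_sub (integrable_smul_invStereo hρ.integrable) integrable_invStereo,
          hcentered, integral_invStereo, sub_zero])
  have hsub := pairing_sub_one hρ.integrable hρ.mass hint
    (integrable_pairing_comp_chordSq hρ.integrable continuous_mul_log)
  rw [integral_mul_log_Ioo] at hsub
  linarith

lemma norm_mul_mul_logChord_le {x y : E2} (hx : 0 ≤ ρ x) (hy : 0 ≤ ρ y)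
    (hxy : chordSq x y ∈ Set.Ioo 0 1) :
    ‖ρ x * ρ y * logChord x y‖ ≤
      2 * (ρ x * (ρ y * log (ρ y) - ρ y) + ρ x * chordSq x y ^ (-(1 / 2) : ℝ)) := by
  rw [mul_assoc, norm_mul, norm_of_nonneg hx, ← mul_add, mul_left_comm]
  exact mul_le_mul_of_nonneg_left (norm_mul_log_le hy hxy) hx

lemma IsEntropyDensity.integrable_logChord (hρ : IsEntropyDensity sphMeasure ρ) :
    Integrable (fun p : E2 × E2 => ρ p.1 * ρ p.2 * logChord p.1 p.2)
      (sphMeasure.prod sphMeasure) := by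
  refine (((hρ.integrable.mul_prod (hρ.mul_log.sub hρ.integrable)).add
    (integrable_mul_comp_chordSq hρ.integrable integrableOn_rpow_neg_half_Ioo)).const_mul 2).mono'
    ((hρ.integrable.mul_prod hρ.integrable).aestronglyMeasurable.mul
      (measurable_log.comp continuous_chordSq.measurable).aestronglyMeasurable) ?_
  filter_upwards [ae_chordSq_mem_Ioo, Measure.quasiMeasurePreserving_fst.ae hρ.nonneg,
    Measure.quasiMeasurePreserving_snd.ae hρ.nonneg] with p hp h1 h2
  exact norm_mul_mul_logChord_le h1 h2 hp

lemma integrable_mul_mul_one_sub_chordSq (hρ : Integrable ρ sphMeasure) {g : E2 → ℝ}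
    (hg : Integrable g sphMeasure) :
    Integrable (fun p : E2 × E2 => ρ p.1 * g p.2 * (1 - chordSq p.1 p.2))
      (sphMeasure.prod sphMeasure) := by
  refine (hρ.mul_prod hg).mul_bdd (c := 1)
    (continuous_const.sub continuous_chordSq).aestronglyMeasurable ?_
  filter_upwards [ae_chordSq_mem_Ioo] with p hp
  rw [norm_of_nonneg (sub_nonneg.mpr hp.2.le)]
  linarith [hp.1]

lemma integral_mul_mul_one_sub_chordSq (hρ : IsEntropyDensity sphMeasure ρ)
    (hcentered : ∫ x, ρ x • invStereo x ∂sphMeasure = 0) {g : E2 → ℝ}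
    (hg : Integrable g sphMeasure) :
    ∫ p : E2 × E2, ρ p.1 * g p.2 * (1 - chordSq p.1 p.2) ∂(sphMeasure.prod sphMeasure) =
      (∫ x, g x ∂sphMeasure) / 2 := by
  rw [integral_prod_symm _ (integrable_mul_mul_one_sub_chordSq hρ.integrable hg), ← integral_div]
  congr with y
  have hsplit : ∀ x, ρ x * g y * (1 - chordSq x y) =
      g y * (ρ x * (1 / 2 + ⟪(1 / 2 : ℝ) • invStereo y, invStereo x⟫_ℝ)) := by
    intro x
    rw [real_inner_smul_left, inner_invStereo, chordSq_comm y]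
    ring
  simp only [hsplit]
  rw [integral_const_mul, hρ.integral_mul_add_inner, hcentered, inner_zero_right, add_zero,
    mul_one_div]

lemma IsEntropyDensity.integrable_one_sub_chordSq_mul_log (hρ : IsEntropyDensity sphMeasure ρ) :
    Integrable (fun p : E2 × E2 => ρ p.1 * ρ p.2 * ((1 - chordSq p.1 p.2) * logChord p.1 p.2))
      (sphMeasure.prod sphMeasure) := by
  simp only [one_sub_mul, mul_sub (ρ _ * ρ _)]
  exact hρ.integrable_logChord.sub
    (integrable_pairing_comp_chordSq hρ.integrable continuous_mul_log)

lemma IsEntropyDensity.neg_le_pairing_one_sub_chordSq_mul_log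
    (hρ : IsEntropyDensity sphMeasure ρ)
    (hcentered : ∫ x, ρ x • invStereo x ∂sphMeasure = 0) :
    -(entropy sphMeasure ρ + 3) ≤
      pairing sphMeasure ρ fun x y => (1 - chordSq x y) * logChord x y := by
  have hg := hρ.mul_log.sub hρ.integrable
  have hρg := integrable_mul_mul_one_sub_chordSq hρ.integrable hg
  have hpow := integrable_mul_comp_chordSq hρ.integrable integrableOn_rpow_neg_half_Ioo
  have hle : ∫ p : E2 × E2, -(2 * (ρ p.1 * (ρ p.2 * log (ρ p.2) - ρ p.2) * (1 - chordSq p.1 p.2) +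
      ρ p.1 * chordSq p.1 p.2 ^ (-(1 / 2) : ℝ))) ∂(sphMeasure.prod sphMeasure) ≤
        pairing sphMeasure ρ fun x y => (1 - chordSq x y) * logChord x y := by
    refine integral_mono_ae ((hρg.add hpow).const_mul 2).neg
      hρ.integrable_one_sub_chordSq_mul_log ?_
    filter_upwards [ae_chordSq_mem_Ioo, Measure.quasiMeasurePreserving_fst.ae hρ.nonneg,
      Measure.quasiMeasurePreserving_snd.ae hρ.nonneg] with p hp h1 h2
    have hlog := (neg_le_abs _).trans (norm_mul_mul_logChord_le h1 h2 hp)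
    have hdrop : 0 ≤ ρ p.1 * chordSq p.1 p.2 ^ (-(1 / 2) : ℝ) * chordSq p.1 p.2 :=
      mul_nonneg (mul_nonneg h1 (rpow_nonneg hp.1.le _)) hp.1.le
    linarith [mul_le_mul_of_nonneg_left hlog (sub_nonneg.mpr hp.2.le)]
  rw [integral_neg, integral_const_mul, integral_add (by exact hρg) hpow,
    integral_mul_comp_chordSq hρ.integrable integrableOn_rpow_neg_half_Ioo,
    integral_rpow_neg_half_Ioo, hρ.mass] at hle
  have hentropy := integral_mul_mul_one_sub_chordSq hρ hcentered hg
  rw [integral_sub' hρ.mul_log hρ.integrable, hρ.mass, ← entropy] at hentropy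
  simp only [Pi.sub_apply] at hentropy
  linarith

lemma IsEntropyDensity.neg_four_le_freeEnergy_of_centered (hρ : IsEntropyDensity sphMeasure ρ)
    (hcentered : ∫ x, ρ x • invStereo x ∂sphMeasure = 0) :
    -4 ≤ freeEnergy sphMeasure logChord ρ := by
  have hsplit := pairing_add (K := fun x y => (1 - chordSq x y) * logChord x y)
    hρ.integrable_one_sub_chordSq_mul_log (L := fun x y => chordSq x y * log (chordSq x y))
    (integrable_pairing_comp_chordSq hρ.integrable continuous_mul_log)
  simp only [← add_mul, sub_add_cancel, one_mul] at hsplit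
  have hlog := hρ.neg_le_pairing_one_sub_chordSq_mul_log hcentered
  have hQ := hρ.neg_one_fourth_le_pairing hcentered
  simp only [freeEnergy]
  linarith

lemma IsEntropyDensity.six_mul_sub_le (hρ : IsEntropyDensity sphMeasure ρ)
    (hcentered : ∫ x, ρ x • invStereo x ∂sphMeasure = 0) {Λ : ℝ}
    (hΛ : ∀ ρ', IsEntropyDensity sphMeasure ρ' → Λ ≤ freeEnergy sphMeasure logChord ρ') {s : ℝ}
    (hs : |s| ≤ 1) :
    6 * (Λ - freeEnergy sphMeasure logChord ρ) ≤
      s ^ 2 * (2 + 2 * freeEnergy sphMeasure logChord ρ) + s ^ 4 := by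
  have h := hρ.two_mul_finrank_mul_sub_le continuous_invStereo.measurable norm_invStereo hcentered
    hρ.integrable_logChord hΛ hs
  have hsplit : pairing sphMeasure ρ (fun x y => ⟪invStereo x, invStereo y⟫_ℝ * logChord x y) =
      pairing sphMeasure ρ logChord -
        2 * pairing sphMeasure ρ fun x y => chordSq x y * log (chordSq x y) := by
    simp only [pairing]
    rw [← integral_const_mul, ← integral_sub hρ.integrable_logChord
      (by exact (integrable_pairing_comp_chordSq hρ.integrable continuous_mul_log).const_mul 2)]
    congr with p
    rw [inner_invStereo]
    ring
  have hrank : finrank ℝ (WithLp 2 (E2 × ℝ)) = 3 := by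
    simp [LinearEquiv.finrank_eq (WithLp.linearEquiv 2 ℝ (E2 × ℝ))]
  rw [hsplit, hrank] at h
  have hQ := hρ.neg_one_fourth_le_pairing hcentered
  have hH := hρ.entropy_nonneg
  simp only [freeEnergy] at h ⊢
  push_cast at h
  nlinarith [mul_le_mul_of_nonneg_left hQ (sq_nonneg s), mul_nonneg (sq_nonneg s) hH]

end SphericalEnergy

/-! ### Conformal invariance -/

section Pullback

variable {X : Type*} [MeasurableSpace X] {m : Measure X} {T : X → X} {d : X → ℝ}

/-- The embedding `T` of `X` has Jacobian `d` relative to `m`: it transports `d • m` to `m`. -/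
structure HasJacobian (m : Measure X) (T : X → X) (d : X → ℝ) : Prop where
  measurableEmbedding : MeasurableEmbedding T
  measurable : Measurable d
  nonneg : ∀ x, 0 ≤ d x
  measurePreserving : MeasurePreserving T (m.withDensity fun x => ENNReal.ofReal (d x)) m

lemma HasJacobian.integrable_comp_iff (hT : HasJacobian m T d) {g : X → ℝ} :
    Integrable (fun x => d x * g (T x)) m ↔ Integrable g m := by
  have := hT.measurable
  refine Iff.trans ?_ (hT.measurePreserving.integrable_comp_emb hT.measurableEmbedding)
  rw [integrable_withDensity_iff_integrable_smul' (by fun_prop) (by simp)]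
  simp only [ENNReal.toReal_ofReal (hT.nonneg _), smul_eq_mul, Function.comp_apply]

lemma HasJacobian.integral_comp (hT : HasJacobian m T d) (g : X → ℝ) :
    ∫ x, d x * g (T x) ∂m = ∫ x, g x ∂m := by
  have := hT.measurable
  refine Eq.trans ?_ (hT.measurePreserving.integral_comp hT.measurableEmbedding g)
  rw [integral_withDensity_eq_integral_toReal_smul (by fun_prop) (by simp)]
  simp only [ENNReal.toReal_ofReal (hT.nonneg _), smul_eq_mul]

lemma HasJacobian.prodMap [SFinite m] (hT : HasJacobian m T d) :
    HasJacobian (m.prod m) (Prod.map T T) fun p => d p.1 * d p.2 where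
  measurableEmbedding := hT.measurableEmbedding.prodMap hT.measurableEmbedding
  measurable := (hT.measurable.comp measurable_fst).mul (hT.measurable.comp measurable_snd)
  nonneg _ := mul_nonneg (hT.nonneg _) (hT.nonneg _)
  measurePreserving := by
    have := hT.measurable
    convert hT.measurePreserving.prod hT.measurePreserving using 1
    rw [prod_withDensity (by fun_prop) (by fun_prop)]
    simp only [ENNReal.ofReal_mul (hT.nonneg _)]

variable {ρ : X → ℝ} {C : ℝ}

lemma IsEntropyDensity.pullback (hρ : IsEntropyDensity m ρ) (hT : HasJacobian m T d)
    (hdC : ∀ x, |log (d x)| ≤ C) :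
    IsEntropyDensity m fun x => d x * ρ (T x) where
  nonneg := by
    have := hT.measurePreserving.quasiMeasurePreserving.ae hρ.nonneg
    rw [ae_withDensity_iff hT.measurable.ennreal_ofReal] at this
    filter_upwards [this] with x hx
    rcases (hT.nonneg x).eq_or_lt with h | h
    · simp [← h]
    · exact mul_nonneg h.le (hx (by simpa using h))
  mass := (hT.integral_comp ρ).trans hρ.mass
  mul_log := by
    have hρT := hT.integrable_comp_iff.mpr hρ.integrable
    refine ((hρT.mul_bdd (c := C) hT.measurable.log.aestronglyMeasurable (ae_of_all _ hdC)).add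
      (hT.integrable_comp_iff.mpr hρ.mul_log)).congr (ae_of_all _ fun x => ?_)
    simp only [Pi.add_apply, mul_mul_log_mul]
    ring

lemma IsEntropyDensity.entropy_pullback (hρ : IsEntropyDensity m ρ) (hT : HasJacobian m T d)
    (hdC : ∀ x, |log (d x)| ≤ C) :
    entropy m (fun x => d x * ρ (T x)) =
      entropy m ρ + ∫ x, d x * ρ (T x) * log (d x) ∂m := by
  have hρT := hT.integrable_comp_iff.mpr hρ.integrable
  rw [entropy, entropy, ← hT.integral_comp fun x => ρ x * log (ρ x), ← integral_add
    (hT.integrable_comp_iff.mpr hρ.mul_log)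
    (hρT.mul_bdd (c := C) hT.measurable.log.aestronglyMeasurable (ae_of_all _ hdC))]
  congr with x
  rw [mul_mul_log_mul]
  ring

lemma IsEntropyDensity.pairing_pullback [SFinite m] (hρ : IsEntropyDensity m ρ)
    (hT : HasJacobian m T d) (hdC : ∀ x, |log (d x)| ≤ C) {K : X → X → ℝ}
    (hK : Integrable (fun p : X × X => ρ p.1 * ρ p.2 * K p.1 p.2) (m.prod m))
    (hKT : ∀ᵐ p ∂(m.prod m),
      K (T p.1) (T p.2) = K p.1 p.2 + (log (d p.1) + log (d p.2)) / 2) :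
    pairing m (fun x => d x * ρ (T x)) K =
      pairing m ρ K - ∫ x, d x * ρ (T x) * log (d x) ∂m := by
  let ρT : X → ℝ := fun x => d x * ρ (T x)
  have hρT : Integrable ρT m := hT.integrable_comp_iff.mpr hρ.integrable
  have hlog : Integrable (fun x => ρT x * log (d x)) m :=
    hρT.mul_bdd (c := C) hT.measurable.log.aestronglyMeasurable (ae_of_all _ hdC)
  have hcross : Integrable (fun p : X × X =>
      ρT p.1 * log (d p.1) * ρT p.2 + ρT p.1 * (ρT p.2 * log (d p.2))) (m.prod m) :=
    (hlog.mul_prod hρT).add (hρT.mul_prod hlog)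
  have hmass : ∫ x, ρT x ∂m = 1 := (hT.integral_comp ρ).trans hρ.mass
  have hexpand : (fun p : X × X => ρT p.1 * ρT p.2 * K p.1 p.2) =ᵐ[m.prod m] fun p =>
      d p.1 * d p.2 * (ρ (T p.1) * ρ (T p.2) * K (T p.1) (T p.2)) -
        (ρT p.1 * log (d p.1) * ρT p.2 + ρT p.1 * (ρT p.2 * log (d p.2))) / 2 := by
    filter_upwards [hKT] with p hp
    simp only [hp, ρT]
    ring
  have hKT_int := hT.prodMap.integrable_comp_iff.mpr hK
  have hKT_eq := hT.prodMap.integral_comp fun p => ρ p.1 * ρ p.2 * K p.1 p.2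
  simp only [Prod.map_fst, Prod.map_snd] at hKT_int hKT_eq
  rw [pairing, integral_congr_ae hexpand, integral_sub hKT_int (hcross.div_const 2),
    hKT_eq, integral_div, integral_add (hlog.mul_prod hρT) (hρT.mul_prod hlog),
    integral_prod_mul (fun x => ρT x * log (d x)), integral_prod_mul ρT fun y => ρT y * log (d y),
    hmass, pairing]
  ring

lemma IsEntropyDensity.freeEnergy_pullback [SFinite m] (hρ : IsEntropyDensity m ρ)
    (hT : HasJacobian m T d) (hdC : ∀ x, |log (d x)| ≤ C) {K : X → X → ℝ}
    (hK : Integrable (fun p : X × X => ρ p.1 * ρ p.2 * K p.1 p.2) (m.prod m))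
    (hKT : ∀ᵐ p ∂(m.prod m),
      K (T p.1) (T p.2) = K p.1 p.2 + (log (d p.1) + log (d p.2)) / 2) :
    freeEnergy m K (fun x => d x * ρ (T x)) = freeEnergy m K ρ := by
  rw [freeEnergy, freeEnergy, hρ.entropy_pullback hT hdC, hρ.pairing_pullback hT hdC hK hKT]
  ring

end Pullback

section ConformalFactor

variable {V : Type*} [NormedAddCommGroup V]

/-- The conformal factor, for the spherical metric, of the similarity `x ↦ b + e ^ τ • x` with
parameter `q = (b, τ)`, as a function of the image point. -/
def confFactor (q : V × ℝ) (y : V) : ℝ :=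
  (exp q.2 + exp (-q.2) * ‖y - q.1‖ ^ 2) / (1 + ‖y‖ ^ 2)

/-- A bound for the conformal factors with parameter `q` and for their inverses. -/
def confBound (q : V × ℝ) : ℝ := exp q.2 + exp (-q.2) * (1 + ‖q.1‖ ^ 2)

lemma confFactor_pos (q : V × ℝ) (y : V) : 0 < confFactor q y := by
  unfold confFactor
  positivity

lemma confFactor_zero (y : V) : confFactor 0 y = 1 := by
  simp only [confFactor, Prod.fst_zero, Prod.snd_zero, neg_zero, exp_zero, one_mul, sub_zero]
  exact div_self (by positivity)

lemma continuous_confFactor : Continuous fun p : (V × ℝ) × V => confFactor p.1 p.2 := by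
  unfold confFactor
  fun_prop (disch := intros; positivity)

lemma exp_neg_mul_chordSq_le_confFactor (q : V × ℝ) (y : V) :
    exp (-q.2) * (1 + ‖q.1‖ ^ 2) * chordSq q.1 y ≤ confFactor q y := by
  have hchord : (1 + ‖q.1‖ ^ 2) * chordSq q.1 y = ‖y - q.1‖ ^ 2 / (1 + ‖y‖ ^ 2) := by
    rw [chordSq, norm_sub_rev]
    field_simp
  rw [mul_assoc, hchord, mul_div_assoc', confFactor]
  gcongr
  exact le_add_of_nonneg_left (exp_pos _).le

lemma exp_mul_one_sub_chordSq_le_confFactor (q : V × ℝ) (y : V) :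
    exp q.2 * (1 - chordSq 0 y) ≤ confFactor q y := by
  rw [one_sub_chordSq_zero_left, ← div_eq_mul_inv, confFactor]
  gcongr
  exact le_add_of_nonneg_right (by positivity)

lemma continuous_confBound : Continuous (confBound : V × ℝ → ℝ) := by
  unfold confBound
  fun_prop

lemma confBound_pos (q : V × ℝ) : 0 < confBound q := by
  unfold confBound
  positivity

lemma confFactor_le_confBound (q : V × ℝ) (y : V) : confFactor q y ≤ confBound q := by
  rw [confFactor, confBound, div_le_iff₀ (by positivity), add_mul, mul_assoc]
  have hdist : ‖y - q.1‖ ^ 2 ≤ (1 + ‖q.1‖ ^ 2) * (1 + ‖y‖ ^ 2) := by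
    have := norm_sub_le y q.1
    nlinarith [sq_nonneg (‖y‖ * ‖q.1‖ - 1), norm_nonneg (y - q.1)]
  gcongr
  exact le_mul_of_one_le_right (exp_pos _).le (by nlinarith [sq_nonneg ‖y‖])

end ConformalFactor

section Similarity

variable {V : Type*} [NormedAddCommGroup V] [NormedSpace ℝ V]

/-- The similarity `x ↦ b + e ^ τ • x` with parameter `q = (b, τ)`. -/
def similarity (q : V × ℝ) (x : V) : V := q.1 + exp q.2 • x

lemma norm_similarity_sub_similarity (q : V × ℝ) (x y : V) :
    ‖similarity q x - similarity q y‖ = exp q.2 * ‖x - y‖ := by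
  rw [similarity, similarity, add_sub_add_left_eq_sub, ← smul_sub, norm_smul,
    norm_of_nonneg (exp_pos _).le]

lemma isHomeomorph_similarity (q : V × ℝ) : IsHomeomorph (similarity q) :=
  ((Homeomorph.smulOfNeZero _ (exp_pos q.2).ne').trans (Homeomorph.addLeft q.1)).isHomeomorph

lemma confFactor_similarity (q : V × ℝ) (x : V) :
    confFactor q (similarity q x) = exp q.2 * (1 + ‖x‖ ^ 2) / (1 + ‖similarity q x‖ ^ 2) := by
  rw [confFactor, similarity, add_sub_cancel_left, norm_smul, norm_of_nonneg (exp_pos _).le,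
    exp_neg]
  field_simp

lemma chordSq_similarity (q : V × ℝ) (x y : V) :
    chordSq (similarity q x) (similarity q y) =
      chordSq x y * (confFactor q (similarity q x) * confFactor q (similarity q y)) := by
  rw [confFactor_similarity, confFactor_similarity, chordSq, chordSq,
    norm_similarity_sub_similarity]
  field_simp

lemma confFactor_similarity_comp (q p : V × ℝ) (x : V) :
    confFactor (similarity q p.1, q.2 + p.2) (similarity q x) =
      confFactor q (similarity q x) * confFactor p x := by
  rw [confFactor_similarity, confFactor, confFactor, norm_similarity_sub_similarity, exp_neg,
    exp_neg, exp_add]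
  field_simp

end Similarity

section ConformalFactorInner

variable {V : Type*} [NormedAddCommGroup V] [InnerProductSpace ℝ V]

lemma one_le_confBound_mul_confFactor (q : V × ℝ) (y : V) :
    1 ≤ confBound q * confFactor q y := by
  have hexpand := norm_add_sq_real (y - q.1) q.1
  rw [sub_add_cancel] at hexpand
  have hinner := real_inner_le_norm (y - q.1) q.1
  have hexp : exp q.2 * exp (-q.2) = 1 := by rw [← exp_add, add_neg_cancel, exp_zero]
  rw [confFactor, confBound, ← mul_div_assoc, one_le_div (by positivity), hexpand]
  nlinarith [sq_nonneg (exp q.2 - exp (-q.2) * (‖y - q.1‖ * ‖q.1‖)),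
    sq_nonneg (exp (-q.2) * ‖y - q.1‖)]

lemma abs_log_confFactor_le (q : V × ℝ) (y : V) : |log (confFactor q y)| ≤ log (confBound q) := by
  refine abs_le.mpr ⟨?_, log_le_log (confFactor_pos q y) (confFactor_le_confBound q y)⟩
  have := log_nonneg (one_le_confBound_mul_confFactor q y)
  rw [log_mul (confBound_pos q).ne' (confFactor_pos q y).ne'] at this
  linarith

lemma confFactor_prodMk_zero (b y : V) :
    confFactor (b, 0) y =
      1 + ‖b‖ ^ 2 / 2 + ⟪WithLp.toLp 2 (-b, ‖b‖ ^ 2 / 2), invStereo y⟫_ℝ := by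
  simp only [confFactor, invStereo, WithLp.prod_inner_apply, inner_neg_left,
    real_inner_smul_right, RCLike.inner_apply, conj_trivial, norm_sub_sq_real, neg_zero, exp_zero,
    real_inner_comm b]
  field_simp
  ring

lemma confFactor_zero_prodMk (τ : ℝ) (y : V) :
    confFactor (0, τ) y = cosh τ + ⟪WithLp.toLp 2 ((0 : V), sinh τ), invStereo y⟫_ℝ := by
  simp only [confFactor, invStereo, WithLp.prod_inner_apply, inner_zero_left, RCLike.inner_apply,
    conj_trivial, sub_zero, cosh_eq, sinh_eq]
  field_simp
  ring

end ConformalFactorInner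

/-! ### Centering -/

section Centering

variable {ρ : E2 → ℝ}

lemma measurable_confFactor (q : E2 × ℝ) : Measurable (confFactor q) :=
  (continuous_confFactor.comp (.prodMk_right q)).measurable

lemma integral_confFactor_sq_mul_comp_similarity (q : E2 × ℝ) (g : E2 → ℝ) :
    ∫ x, confFactor q (similarity q x) ^ 2 * g (similarity q x) ∂sphMeasure =
      ∫ x, g x ∂sphMeasure := by
  have hmu2 : ∀ x : E2, mu2 x * (confFactor q (similarity q x) ^ 2 * g (similarity q x)) =
      exp q.2 ^ 2 * (mu2 (similarity q x) * g (similarity q x)) := by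
    intro x
    rw [confFactor_similarity, mu2, mu2]
    field_simp
  simp only [integral_sphMeasure, smul_eq_mul, hmu2]
  rw [integral_const_mul]
  simp only [similarity]
  rw [Measure.integral_comp_smul volume (fun x => mu2 (q.1 + x) * g (q.1 + x)) (exp q.2),
    integral_add_left_eq_self (fun x => mu2 x * g x) q.1, finrank_euclideanSpace_fin, smul_eq_mul,
    abs_of_pos (by positivity), mul_inv_cancel_left₀ (by positivity)]

lemma hasJacobian_similarity (q : E2 × ℝ) :
    HasJacobian sphMeasure (similarity q) fun x => confFactor q (similarity q x) ^ 2 where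
  measurableEmbedding := (isHomeomorph_similarity q).isClosedEmbedding.measurableEmbedding
  measurable :=
    ((measurable_confFactor q).comp (isHomeomorph_similarity q).continuous.measurable).pow_const 2
  nonneg _ := sq_nonneg _
  measurePreserving := by
    have hT := (isHomeomorph_similarity q).continuous
    have hconf := measurable_confFactor q
    have hd : Integrable (fun x => confFactor q (similarity q x) ^ 2) sphMeasure := by
      have hone := integral_confFactor_sq_mul_comp_similarity q fun _ => 1
      simp only [mul_one, integral_const, probReal_univ, smul_eq_mul] at hone
      exact .of_integral_ne_zero (by rw [hone]; exact one_ne_zero)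
    have := isFiniteMeasure_withDensity_ofReal hd.hasFiniteIntegral
    have := Measure.isFiniteMeasure_map (sphMeasure.withDensity fun x =>
      ENNReal.ofReal (confFactor q (similarity q x) ^ 2)) (similarity q)
    refine ⟨hT.measurable, ext_of_forall_integral_eq_of_IsFiniteMeasure fun g => ?_⟩
    rw [integral_map hT.aemeasurable g.continuous.aestronglyMeasurable,
      integral_withDensity_eq_integral_toReal_smul (by fun_prop) (by simp),
      ← integral_confFactor_sq_mul_comp_similarity q g]
    simp only [ENNReal.toReal_ofReal (sq_nonneg _), smul_eq_mul]

lemma logChord_similarity (q : E2 × ℝ) :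
    ∀ᵐ p : E2 × E2 ∂(sphMeasure.prod sphMeasure),
      logChord (similarity q p.1) (similarity q p.2) = logChord p.1 p.2 +
        (log (confFactor q (similarity q p.1) ^ 2) +
          log (confFactor q (similarity q p.2) ^ 2)) / 2 := by
  filter_upwards [ae_chordSq_mem_Ioo] with p hp
  have := (confFactor_pos q (similarity q p.1)).ne'
  have := (confFactor_pos q (similarity q p.2)).ne'
  rw [logChord, chordSq_similarity, log_mul hp.1.ne' (by positivity), log_mul (by assumption)
    (by assumption), log_pow, log_pow]
  push_cast
  ring

/-- The density obtained from `ρ` by pulling back along `similarity q`. -/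
def similarityPullback (q : E2 × ℝ) (ρ : E2 → ℝ) (x : E2) : ℝ :=
  confFactor q (similarity q x) ^ 2 * ρ (similarity q x)

lemma abs_log_confFactor_sq_le (q : E2 × ℝ) (x : E2) :
    |log (confFactor q (similarity q x) ^ 2)| ≤ 2 * log (confBound q) := by
  rw [log_pow, abs_mul, Nat.cast_two, abs_two]
  gcongr
  exact abs_log_confFactor_le q _

lemma IsEntropyDensity.pullback_similarity (hρ : IsEntropyDensity sphMeasure ρ) (q : E2 × ℝ) :
    IsEntropyDensity sphMeasure (similarityPullback q ρ) :=
  hρ.pullback (hasJacobian_similarity q) (abs_log_confFactor_sq_le q)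

lemma IsEntropyDensity.freeEnergy_similarityPullback (hρ : IsEntropyDensity sphMeasure ρ)
    (q : E2 × ℝ) :
    freeEnergy sphMeasure logChord (similarityPullback q ρ) =
      freeEnergy sphMeasure logChord ρ :=
  hρ.freeEnergy_pullback (hasJacobian_similarity q) (abs_log_confFactor_sq_le q)
    hρ.integrable_logChord (logChord_similarity q)

/-- The mean of the logarithm of the conformal factor; the densities `similarityPullback q ρ` are
centered at its critical points. -/
def meanLogConf (ρ : E2 → ℝ) (q : E2 × ℝ) : ℝ := ∫ y, ρ y * log (confFactor q y) ∂sphMeasure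

lemma integrable_mul_log_confFactor (hρ : Integrable ρ sphMeasure) (q : E2 × ℝ) :
    Integrable (fun y => ρ y * log (confFactor q y)) sphMeasure :=
  hρ.mul_bdd (measurable_confFactor q).log.aestronglyMeasurable
    (ae_of_all _ (abs_log_confFactor_le q))

lemma meanLogConf_zero : meanLogConf ρ 0 = 0 := by
  simp [meanLogConf, confFactor_zero]

lemma continuous_meanLogConf (hρ : Integrable ρ sphMeasure) : Continuous (meanLogConf ρ) := by
  refine continuous_iff_continuousAt.mpr fun q₀ => ?_
  have hbound : ∀ᶠ q in nhds q₀, log (confBound q) < log (confBound q₀) + 1 :=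
    ((continuous_confBound.log fun q => (confBound_pos q).ne').tendsto q₀).eventually_lt_const
      (lt_add_one _)
  refine continuousAt_of_dominated (bound := fun y => |ρ y| * (log (confBound q₀) + 1))
    (Eventually.of_forall fun q => (integrable_mul_log_confFactor hρ q).aestronglyMeasurable) ?_
    (hρ.abs.mul_const _) (ae_of_all _ fun y => ?_)
  · filter_upwards [hbound] with q hq
    refine ae_of_all _ fun y => ?_
    rw [norm_mul, norm_eq_abs]
    gcongr
    exact (abs_log_confFactor_le q y).trans hq.le
  · exact ((continuous_confFactor.comp (.prodMk_left y)).log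
      fun q => (confFactor_pos q y).ne').continuousAt.const_mul _

lemma measurePreserving_one_sub_chordSq (b : E2) :
    MeasurePreserving (fun x => 1 - chordSq b x) sphMeasure (volume.restrict (Set.Ioo 0 1)) := by
  have h := (Measure.measurePreserving_sub_left volume (1 : ℝ)).restrict_preimage
    (measurableSet_Ioo (a := (0 : ℝ)) (b := 1))
  rw [Set.preimage_const_sub_Ioo, sub_self, sub_zero] at h
  exact h.comp (measurePreserving_chordSq b)

lemma IsEntropyDensity.log_le_meanLogConf (hρ : IsEntropyDensity sphMeasure ρ) {q : E2 × ℝ}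
    {c : ℝ} (hc : 0 < c) {u : E2 → ℝ}
    (hu : MeasurePreserving u sphMeasure (volume.restrict (Set.Ioo 0 1)))
    (hle : ∀ y, c * u y ≤ confFactor q y) :
    log c - (2 * entropy sphMeasure ρ + 2) ≤ meanLogConf ρ q := by
  have hlog := hρ.integrable_mul_log_uniform hu
  have h : ∫ y, (log c * ρ y + ρ y * log (u y)) ∂sphMeasure ≤ meanLogConf ρ q := by
    refine integral_mono_ae ((hρ.integrable.const_mul _).add hlog)
      (integrable_mul_log_confFactor hρ.integrable q) ?_
    filter_upwards [hρ.nonneg, ae_mem_Ioo_of_measurePreserving hu] with y hy huy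
    have := log_le_log (mul_pos hc huy.1) (hle y)
    rw [log_mul hc.ne' huy.1.ne'] at this
    linarith [mul_le_mul_of_nonneg_left this hy]
  rw [integral_add (hρ.integrable.const_mul _) hlog, integral_const_mul, hρ.mass] at h
  linarith [hρ.neg_le_integral_mul_log_uniform hu]

lemma IsEntropyDensity.exists_meanLogConf_le (hρ : IsEntropyDensity sphMeasure ρ) :
    ∃ q, ∀ p, meanLogConf ρ q ≤ meanLogConf ρ p := by
  set C := 2 * entropy sphMeasure ρ + 2
  refine (continuous_meanLogConf hρ.integrable).exists_forall_le' 0 ?_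
  filter_upwards [(isCompact_closedBall (0 : E2 × ℝ) (exp C)).compl_mem_cocompact] with q hq
  rw [meanLogConf_zero]
  by_contra! hneg
  have hscale := hρ.log_le_meanLogConf (exp_pos q.2) (measurePreserving_one_sub_chordSq 0)
    (exp_mul_one_sub_chordSq_le_confFactor q)
  have hshift := hρ.log_le_meanLogConf (by positivity) (measurePreserving_chordSq q.1)
    (exp_neg_mul_chordSq_le_confFactor q)
  rw [log_exp] at hscale
  rw [log_mul (by positivity) (by positivity), log_exp] at hshift
  have hlog : 0 ≤ log (1 + ‖q.1‖ ^ 2) := log_nonneg (by nlinarith [sq_nonneg ‖q.1‖])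
  have hsnd : ‖q.2‖ ≤ exp C := by
    rw [norm_eq_abs, abs_le]
    constructor <;> linarith [add_one_le_exp C]
  have hfst : ‖q.1‖ ≤ exp C := by
    have : 1 + ‖q.1‖ ^ 2 < exp (2 * C) := (log_lt_iff_lt_exp (by positivity)).mp (by linarith)
    rw [two_mul, exp_add] at this
    nlinarith [exp_pos C]
  exact hq (mem_closedBall_zero_iff.mpr (norm_prod_le_iff.mpr ⟨hfst, hsnd⟩))

lemma meanLogConf_similarityPullback (hρ : Integrable ρ sphMeasure) (q p : E2 × ℝ) :
    meanLogConf (similarityPullback q ρ) p =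
      meanLogConf ρ (similarity q p.1, q.2 + p.2) - meanLogConf ρ q := by
  rw [meanLogConf, meanLogConf, meanLogConf, ← integral_sub
    (integrable_mul_log_confFactor hρ _) (integrable_mul_log_confFactor hρ _),
    ← (hasJacobian_similarity q).integral_comp fun y =>
      ρ y * log (confFactor (similarity q p.1, q.2 + p.2) y) - ρ y * log (confFactor q y)]
  congr with x
  rw [confFactor_similarity_comp, log_mul (confFactor_pos _ _).ne' (confFactor_pos _ _).ne',
    similarityPullback]
  ring

lemma IsEntropyDensity.one_le_integral_mul_confFactor (hρ : IsEntropyDensity sphMeasure ρ)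
    {q : E2 × ℝ} (hq : 0 ≤ meanLogConf ρ q) : 1 ≤ ∫ y, ρ y * confFactor q y ∂sphMeasure := by
  have hint : Integrable (fun y => ρ y * confFactor q y) sphMeasure :=
    hρ.integrable.mul_bdd (measurable_confFactor q).aestronglyMeasurable
      (ae_of_all _ fun y => by
        rw [norm_of_nonneg (confFactor_pos q y).le]
        exact confFactor_le_confBound q y)
  have h : meanLogConf ρ q ≤ ∫ y, (ρ y * confFactor q y - ρ y) ∂sphMeasure := by
    refine integral_mono_ae (integrable_mul_log_confFactor hρ.integrable q)
      (hint.sub hρ.integrable) ?_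
    filter_upwards [hρ.nonneg] with y hy
    linarith [mul_le_mul_of_nonneg_left (log_le_sub_one_of_pos (confFactor_pos q y)) hy]
  rw [integral_sub hint hρ.integrable, hρ.mass] at h
  linarith

lemma IsEntropyDensity.integral_smul_invStereo_eq_zero (hρ : IsEntropyDensity sphMeasure ρ)
    (hmin : ∀ q, 0 ≤ meanLogConf ρ q) : ∫ y, ρ y • invStereo y ∂sphMeasure = 0 := by
  have hle := fun q => hρ.one_le_integral_mul_confFactor (hmin q)
  set v := ∫ y, ρ y • invStereo y ∂sphMeasure with hv
  have hfst : v.fst = 0 := by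
    have hquad : ∀ t : ℝ, 0 ≤ (‖v.fst‖ ^ 2 * (1 + v.snd) / 2) * (t * t) +
        -‖v.fst‖ ^ 2 * t + 0 := by
      intro t
      have h := hle (t • v.fst, 0)
      simp only [confFactor_prodMk_zero, hρ.integral_mul_add_inner, ← hv] at h
      simp only [WithLp.prod_inner_apply, inner_neg_left, real_inner_smul_left,
        RCLike.inner_apply, conj_trivial, norm_smul, mul_pow,
        norm_eq_abs, sq_abs] at h
      rw [WithLp.ofLp_fst, WithLp.ofLp_snd, real_inner_self_eq_norm_sq] at h
      linarith
    have := discrim_le_zero hquad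
    rw [discrim, mul_zero, sub_zero, neg_sq] at this
    simpa using le_antisymm this (by positivity)
  have hsnd : v.snd = 0 := by
    have hmin' : IsLocalMin (fun τ => cosh τ + v.snd * sinh τ) 0 := by
      refine Eventually.of_forall fun τ => ?_
      have h := hle (0, τ)
      simp only [confFactor_zero_prodMk, hρ.integral_mul_add_inner, ← hv] at h
      simpa [WithLp.prod_inner_apply] using h
    simpa using hmin'.hasDerivAt_eq_zero
      ((hasDerivAt_cosh 0).add ((hasDerivAt_sinh 0).const_mul v.snd))
  exact WithLp.ofLp_injective 2 (Prod.ext hfst hsnd)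

lemma IsEntropyDensity.exists_centered (hρ : IsEntropyDensity sphMeasure ρ) :
    ∃ ρ', IsEntropyDensity sphMeasure ρ' ∧ (∫ y, ρ' y • invStereo y ∂sphMeasure = 0) ∧
      freeEnergy sphMeasure logChord ρ' = freeEnergy sphMeasure logChord ρ := by
  obtain ⟨q, hq⟩ := hρ.exists_meanLogConf_le
  refine ⟨_, hρ.pullback_similarity q,
    (hρ.pullback_similarity q).integral_smul_invStereo_eq_zero fun p => ?_,
    hρ.freeEnergy_similarityPullback q⟩
  rw [meanLogConf_similarityPullback hρ.integrable]
  exact sub_nonneg.mpr (hq _)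

end Centering

/-! ### The logarithmic HLS inequality -/

section LogarithmicHLS

variable {ρ : E2 → ℝ}

lemma IsEntropyDensity.neg_four_le_freeEnergy (hρ : IsEntropyDensity sphMeasure ρ) :
    -4 ≤ freeEnergy sphMeasure logChord ρ := by
  obtain ⟨ρ', hρ', hcentered, heq⟩ := hρ.exists_centered
  exact heq ▸ hρ'.neg_four_le_freeEnergy_of_centered hcentered

lemma IsEntropyDensity.neg_one_le_freeEnergy (hρ : IsEntropyDensity sphMeasure ρ) :
    -1 ≤ freeEnergy sphMeasure logChord ρ := by
  set S := freeEnergy sphMeasure logChord '' {ρ' | IsEntropyDensity sphMeasure ρ'}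
  have hS : BddBelow S := by
    refine ⟨-4, ?_⟩
    rintro _ ⟨ρ', hρ', rfl⟩
    exact hρ'.neg_four_le_freeEnergy
  have hle : ∀ ρ', IsEntropyDensity sphMeasure ρ' →
      sInf S ≤ freeEnergy sphMeasure logChord ρ' := fun ρ' hρ' =>
    csInf_le hS (Set.mem_image_of_mem _ hρ')
  refine le_trans ?_ (hle ρ hρ)
  by_contra! hlt
  -- For `s ^ 2 = t` the gain `-2 * s ^ 2 * (1 + sInf S)` in `six_mul_sub_le` beats `s ^ 4`.
  set t := min 1 (-1 - sInf S)
  have ht : 0 < t := lt_min one_pos (by linarith)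
  have ht1 : t ≤ 1 := min_le_left _ _
  have htS : t ≤ -1 - sInf S := min_le_right _ _
  obtain ⟨_, ⟨ρ₁, hρ₁, rfl⟩, hρ₁S⟩ := exists_lt_of_csInf_lt
    (Set.Nonempty.image _ ⟨ρ, hρ⟩) (lt_add_of_pos_right (sInf S) (by positivity : 0 < t ^ 2 / 16))
  obtain ⟨ρ₂, hρ₂, hcentered, heq⟩ := hρ₁.exists_centered
  have h := hρ₂.six_mul_sub_le hcentered hle (s := √t)
    (by rwa [abs_of_nonneg (sqrt_nonneg t), sqrt_le_one])
  rw [heq, show √t ^ 4 = (√t ^ 2) ^ 2 by ring, sq_sqrt ht.le] at h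
  nlinarith

lemma two_mul_log_norm_sub {x y : E2} (hxy : x ≠ y) :
    2 * log ‖x - y‖ =
      logChord x y + (log (1 + ‖x‖ ^ 2) + log (1 + ‖y‖ ^ 2)) := by
  have := sub_ne_zero.mpr hxy
  rw [logChord, chordSq, log_div (by positivity) (by positivity),
    log_mul (by positivity) (by positivity), log_pow]
  push_cast
  ring

lemma IsEntropyDensity.integrable_mul_log_one_add_norm_sq (hρ : IsEntropyDensity sphMeasure ρ) :
    Integrable (fun x => ρ x * log (1 + ‖x‖ ^ 2)) sphMeasure := by
  refine (hρ.integrable_mul_log_uniform (measurePreserving_one_sub_chordSq 0)).neg.congr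
    (ae_of_all _ fun x => ?_)
  simp only [Pi.neg_apply, one_sub_chordSq_zero_left, log_inv, mul_neg, neg_neg]

lemma isEntropyDensity_one : IsEntropyDensity sphMeasure fun _ => 1 where
  nonneg := ae_of_all _ fun _ => zero_le_one
  mass := by simp
  mul_log := by simp

lemma IsEntropyDensity.two_mul_pairing_log_norm_sub (hρ : IsEntropyDensity sphMeasure ρ) :
    2 * pairing sphMeasure (fun x => ρ x - 1) (fun x y => log ‖x - y‖) =
      pairing sphMeasure ρ logChord + 1 := by
  have hmean : ∫ x, (ρ x - 1) ∂sphMeasure = 0 := by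
    rw [integral_sub hρ.integrable (integrable_const 1), hρ.mass]
    simp
  have hlog : Integrable (fun x => (ρ x - 1) * log (1 + ‖x‖ ^ 2)) sphMeasure := by
    simp only [sub_mul]
    exact hρ.integrable_mul_log_one_add_norm_sq.sub
      isEntropyDensity_one.integrable_mul_log_one_add_norm_sq
  have hne : ∀ᵐ p : E2 × E2 ∂(sphMeasure.prod sphMeasure), p.1 ≠ p.2 := by
    filter_upwards [ae_chordSq_mem_Ioo] with p hp heq
    simp [heq, chordSq] at hp
  have hkernel : 2 * pairing sphMeasure (fun x => ρ x - 1) (fun x y => log ‖x - y‖) =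
      pairing sphMeasure (fun x => ρ x - 1)
        fun x y => logChord x y + (log (1 + ‖x‖ ^ 2) + log (1 + ‖y‖ ^ 2)) := by
    rw [pairing, pairing, ← integral_const_mul]
    refine integral_congr_ae ?_
    filter_upwards [hne] with p hp
    rw [← two_mul_log_norm_sub hp]
    ring
  have hsub := pairing_sub_one hρ.integrable hρ.mass integrableOn_log_Ioo hρ.integrable_logChord
  rw [integral_log_Ioo, sub_neg_eq_add] at hsub
  rw [hkernel, ← hsub]
  exact pairing_add_add (hρ.integrable.sub (integrable_const 1)) hmean hlog
    (integrable_sub_one_mul_sub_one_mul_chordSq hρ.integrable integrableOn_log_Ioo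
      hρ.integrable_logChord)

lemma IsEntropyDensity.neg_two_mul_pairing_le_entropy (hρ : IsEntropyDensity sphMeasure ρ)
    {θ : ℝ} (hθ0 : 0 ≤ θ) (hθ1 : θ ≤ 1) :
    -2 * θ * pairing sphMeasure (fun x => ρ x - 1) (fun x y => log ‖x - y‖) ≤
      entropy sphMeasure ρ := by
  have hpair := hρ.two_mul_pairing_log_norm_sub
  have hfree := hρ.neg_one_le_freeEnergy
  rw [freeEnergy] at hfree
  nlinarith [hρ.entropy_nonneg]

lemma integrable_sphMeasure_iff {g : E2 → ℝ} :
    Integrable g sphMeasure ↔ Integrable fun x => mu2 x * g x := by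
  have := continuous_mu2
  rw [sphMeasure, integrable_withDensity_iff_integrable_smul' (by fun_prop) (by simp)]
  simp only [ENNReal.toReal_ofReal (mu2_pos _).le, smul_eq_mul]

lemma integral_prod_sphMeasure (g : E2 × E2 → ℝ) :
    ∫ p, g p ∂(sphMeasure.prod sphMeasure) = ∫ p : E2 × E2, mu2 p.1 * mu2 p.2 * g p := by
  have := continuous_mu2
  rw [sphMeasure, prod_withDensity (by fun_prop) (by fun_prop),
    integral_withDensity_eq_integral_toReal_smul (by fun_prop)
      (ae_of_all _ fun p => ENNReal.mul_lt_top ENNReal.ofReal_lt_top ENNReal.ofReal_lt_top)]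
  simp only [ENNReal.toReal_mul, ENNReal.toReal_ofReal (mu2_pos _).le, smul_eq_mul]
  rfl

variable {f : E2 → ℝ} {M : ℝ}

lemma mu2_mul_div_mul (hM : M ≠ 0) (x : E2) (c : ℝ) :
    mu2 x * (f x / (M * mu2 x) * c) = f x * c / M := by
  have := (mu2_pos x).ne'
  field_simp

lemma isEntropyDensity_div (hM : 0 < M) (hf : 0 ≤ᵐ[volume] f) (hmass : ∫ x, f x = M)
    (hent : Integrable fun x => f x * log (f x / (M * mu2 x))) :
    IsEntropyDensity sphMeasure fun x => f x / (M * mu2 x) where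
  nonneg := by
    filter_upwards [withDensity_absolutelyContinuous _ _ hf] with x hx
    exact div_nonneg hx (mul_pos hM (mu2_pos x)).le
  mass := by
    have h := fun x => mu2_mul_div_mul (f := f) hM.ne' x 1
    simp only [mul_one] at h
    simp only [integral_sphMeasure, smul_eq_mul, h]
    rw [integral_div, hmass, div_self hM.ne']
  mul_log := by
    simp only [integrable_sphMeasure_iff, mu2_mul_div_mul hM.ne']
    exact hent.div_const M

lemma entropy_div (hM : M ≠ 0) :
    entropy sphMeasure (fun x => f x / (M * mu2 x)) =
      (∫ x, f x * log (f x / (M * mu2 x))) / M := by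
  simp only [entropy, integral_sphMeasure, smul_eq_mul, mu2_mul_div_mul hM, integral_div]

lemma pairing_div_sub_one (hM : M ≠ 0) (K : E2 → E2 → ℝ) :
    pairing sphMeasure (fun x => f x / (M * mu2 x) - 1) K =
      (∫ p : E2 × E2, (f p.1 - M * mu2 p.1) * (f p.2 - M * mu2 p.2) * K p.1 p.2) / M ^ 2 := by
  rw [pairing, integral_prod_sphMeasure, ← integral_div]
  congr with p
  have := (mu2_pos p.1).ne'
  have := (mu2_pos p.2).ne'
  field_simp

lemma log_mu2 (x : E2) : log (mu2 x) = -Vpot x := by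
  rw [mu2, Vpot, one_div, log_inv, log_mul pi_ne_zero (by positivity), log_pow]
  push_cast
  ring

lemma Admissible.integrable_mul_log_div (hf : Admissible f) (hM : M ≠ 0) :
    Integrable fun x => f x * log (f x / (M * mu2 x)) := by
  obtain ⟨hmeas, -, hint, habs, hV, -⟩ := hf
  have hlog : Integrable fun x => f x * log (f x) :=
    habs.mono (hmeas.mul hmeas.log).aestronglyMeasurable (ae_of_all _ fun x => by simp)
  refine ((hlog.sub (hint.mul_const (log M))).add hV).congr (ae_of_all _ fun x => ?_)
  rcases eq_or_ne (f x) 0 with h | h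
  · simp [h]
  · have := (mu2_pos x).ne'
    simp only [Pi.add_apply, Pi.sub_apply]
    rw [log_div h (by positivity), log_mul hM this, log_mu2]
    ring

end LogarithmicHLS

theorem log_HLS_relative_entropy_form_general (α M : ℝ) (hα0 : 0 ≤ α) (hα1 : α ≤ 1)
    (hM : 0 < M) (f : E2 → ℝ) (hf : 0 ≤ᵐ[volume] f) (hmass : ∫ x, f x = M)
    (hent : Integrable fun x => f x * Real.log (f x / (M * mu2 x))) :
    (∫ x, f x * Real.log (f x / (M * mu2 x)))
      ≥ -(2 / M) * (1 - α) *
          ∫ p : E2 × E2,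
            (f p.1 - M * mu2 p.1) * (f p.2 - M * mu2 p.2) * Real.log ‖p.1 - p.2‖ := by
  have h := (isEntropyDensity_div hM hf hmass hent).neg_two_mul_pairing_le_entropy
    (sub_nonneg.mpr hα1) (sub_le_self 1 hα0)
  rw [entropy_div hM.ne', pairing_div_sub_one hM.ne', le_div_iff₀ hM] at h
  refine h.trans_eq' ?_
  field_simp

/-- Relative-entropy form of the generalized logarithmic HLS inequality for α ∈ [0,1). -/
theorem log_HLS_relative_entropy_form (α M : ℝ) (hα0 : 0 ≤ α) (hα1 : α < 1)
    (hM : 0 < M) (f : E2 → ℝ) (hf : Admissible f) (hmass : ∫ x, f x = M) :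
    (∫ x, f x * Real.log (f x / (M * mu2 x)))
      ≥ -(2 / M) * (1 - α) *
          ∫ p : E2 × E2,
            (f p.1 - M * mu2 p.1) * (f p.2 - M * mu2 p.2) * Real.log ‖p.1 - p.2‖ :=
  log_HLS_relative_entropy_form_general α M hα0 hα1.le hM f hf.2.1 hmass
    (hf.integrable_mul_log_div hM.ne')
end
end
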